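/- arXiv:1301.5799 — 4 statements merged into one kernel-verified Lean document; each statement's English description precedes it below -/
import Mathlib

section
/- Let K be a compact Hausdorff space and G = ⋂_{n∈ℕ} cl(U_n), where each U_n is an open subset of K and cl denotes closure in K. If D is induced by an r-skeleton in K, then G ∩ D is dense in G; consequently, G ∩ D is induced by an r-skeleton in the compact space G. -/
/-!
Write `r_s` for the retractions and `G = ⋂ n, cl (U n)`. Call an index `t` *good* if `r_t[G] ⊆ G`.
The good indices are closed under suprema of increasing sequences because `G` is closed, so once
they are known to be cofinal, restricting the `r_t` with `t` good to `G` gives an r-skeleton in `G`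
inducing `G ∩ D`, and density follows from `r_t x → x`.

Cofinality (`exists_ge_mapsTo`): if the index set has a maximal element `m`, then `r_m` is the
identity. Otherwise countable sets of indices are bounded above
(`exists_upper_bound`). Since `r_s[K]` is metrizable and compact and `D` is dense, each `s` admits
some `s' > s` such that `r_s[U n ∩ r_{s'}[K]]` is dense in `r_s[U n]` for all `n`
(`exists_gt_approx`). Iterating produces `s_0 < s_1 < ⋯` with supremum `t`. For `x ∈ cl (U n)` the
compact sets `{y ∈ cl (U n ∩ r_t[K]) | r_{s_k} y = r_{s_k} x}` are nonempty and decrease in `k`;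
a common point `y` satisfies `y = r_t y = r_t x`, whence `r_t x ∈ cl (U n)`
(`mapsTo_closure_of_approx`).
-/

open Filter Topology TopologicalSpace Set

universe u v

/-- A retractional skeleton in a topological space `K`: a family `r s : C(K, K)` of continuous
retractions indexed by an up-directed (nonempty) partially ordered set `Γ` such that
(i) each `r s` has metrizable range and the net `(r s x)` converges to `x`;
(ii) `s ≤ t` implies `r s ∘ r t = r t ∘ r s = r s`;
(iii) each strictly increasing sequence has a supremum `t` and `r t x = lim_n r (f n) x`. -/
structure RetractionalSkeleton (K : Type u) [TopologicalSpace K] : Type (u + 1) where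
  Γ : Type u
  [po : PartialOrder Γ]
  [ne : Nonempty Γ]
  directed : ∀ s t : Γ, ∃ w, s ≤ w ∧ t ≤ w
  r : Γ → C(K, K)
  isRetraction : ∀ s, ∀ x : K, r s (r s x) = r s x
  metrizable : ∀ s, MetrizableSpace ↥(Set.range (r s))
  tendsto_id : ∀ x : K, Tendsto (fun s => r s x) atTop (𝓝 x)
  comp_eq_of_le : ∀ s t : Γ, s ≤ t → ∀ x : K, r s (r t x) = r s x ∧ r t (r s x) = r s x
  sup_seq : ∀ f : ℕ → Γ, StrictMono f → ∃ t : Γ, IsLUB (Set.range f) t ∧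
    ∀ x : K, Tendsto (fun n => r (f n) x) atTop (𝓝 (r t x))

/-- The set `D(𝔰) = ⋃ s, r s [K]` induced by a retractional skeleton. -/
def RetractionalSkeleton.inducedSet {K : Type u} [TopologicalSpace K]
    (𝔰 : RetractionalSkeleton K) : Set K := ⋃ s, Set.range (𝔰.r s)

/-- `D` is induced by an r-skeleton in `K`. -/
def IsInducedByRSkeleton {K : Type u} [TopologicalSpace K] (D : Set K) : Prop :=
  ∃ 𝔰 : RetractionalSkeleton K, 𝔰.inducedSet = D

/-- `K` has a retractional skeleton. -/
def HasRetractionalSkeleton (K : Type u) [TopologicalSpace K] : Prop :=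
  Nonempty (RetractionalSkeleton K)

namespace RetractionalSkeleton

attribute [local instance] RetractionalSkeleton.po RetractionalSkeleton.ne

variable {K : Type u} [TopologicalSpace K] (𝔰 : RetractionalSkeleton K)

theorem isDirectedOrder : IsDirectedOrder 𝔰.Γ := ⟨𝔰.directed⟩

theorem mem_range_iff {s : 𝔰.Γ} {x : K} : x ∈ range (𝔰.r s) ↔ 𝔰.r s x = x :=
  ⟨by rintro ⟨y, rfl⟩; exact 𝔰.isRetraction s y, fun h => ⟨x, h⟩⟩

theorem range_mono {s t : 𝔰.Γ} (h : s ≤ t) : range (𝔰.r s) ⊆ range (𝔰.r t) := by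
  rintro _ ⟨y, rfl⟩
  exact ⟨𝔰.r s y, (𝔰.comp_eq_of_le s t h y).2⟩

theorem dense_inducedSet : Dense 𝔰.inducedSet := by
  have := 𝔰.isDirectedOrder
  intro x
  exact mem_closure_of_tendsto (𝔰.tendsto_id x)
    (Eventually.of_forall fun s => mem_iUnion.2 ⟨s, x, rfl⟩)

theorem exists_upper_bound (hmax : ∀ s : 𝔰.Γ, ∃ t, s < t) (g : ℕ → 𝔰.Γ) :
    ∃ t, ∀ n, g n ≤ t := by
  have step : ∀ s t : 𝔰.Γ, ∃ w, s < w ∧ t ≤ w := fun s t => by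
    obtain ⟨w, h1, h2⟩ := 𝔰.directed s t
    obtain ⟨w', h⟩ := hmax w
    exact ⟨w', h1.trans_lt h, h2.trans h.le⟩
  choose w hw1 hw2 using step
  let f : ℕ → 𝔰.Γ := fun n => Nat.rec (g 0) (fun k p => w p (g k)) n
  obtain ⟨t, ht, -⟩ := 𝔰.sup_seq f (strictMono_nat_of_lt_succ fun n => hw1 (f n) (g n))
  exact ⟨t, fun n => (hw2 (f n) (g n)).trans (ht.1 ⟨n + 1, rfl⟩)⟩

/-- A cofinal set of indices still yields nets converging to the identity. -/
theorem tendsto_id_of_cofinal {p : 𝔰.Γ → Prop} (hp : ∀ s, ∃ t, s ≤ t ∧ p t) (x : K) :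
    Tendsto (fun t : {t // p t} => 𝔰.r t x) atTop (𝓝 x) := by
  refine (𝔰.tendsto_id x).comp (tendsto_atTop.2 fun s => ?_)
  obtain ⟨t, hst, ht⟩ := hp s
  filter_upwards [eventually_ge_atTop (⟨t, ht⟩ : {t // p t})] with a ha
  exact hst.trans ha

variable [CompactSpace K]

/-- The range of `r s` is compact metrizable, hence hereditarily separable; so a countable subset
of `V ∩ D` suffices to approximate `r s '' V`, and a single `r s'` fixes that subset. -/
theorem exists_approx_one (hmax : ∀ s : 𝔰.Γ, ∃ t, s < t) (s : 𝔰.Γ) {V : Set K} (hV : IsOpen V) :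
    ∃ s', 𝔰.r s '' V ⊆ closure (𝔰.r s '' (V ∩ range (𝔰.r s'))) := by
  have := 𝔰.metrizable s
  have : CompactSpace (range (𝔰.r s)) :=
    isCompact_iff_compactSpace.1 (isCompact_range (𝔰.r s).continuous)
  let _ := metrizableSpaceMetric (range (𝔰.r s))
  have : SecondCountableTopology (range (𝔰.r s)) := inferInstance
  let q : K → range (𝔰.r s) := fun x => ⟨𝔰.r s x, x, rfl⟩
  obtain ⟨d, hd_count, hd_dense⟩ := exists_countable_dense ↥(q '' (V ∩ 𝔰.inducedSet))
  have hpick : ∀ z : ↥(q '' (V ∩ 𝔰.inducedSet)), ∃ w, ∃ y ∈ V, y ∈ range (𝔰.r w) ∧ q y = z := by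
    rintro ⟨_, y, ⟨hyV, hyD⟩, rfl⟩
    obtain ⟨w, hw⟩ := mem_iUnion.1 hyD
    exact ⟨w, y, hyV, hw, rfl⟩
  choose w y hyV hyw hqy using hpick
  obtain ⟨s', hs'⟩ : ∃ s', ∀ z ∈ d, w z ≤ s' := by
    rcases d.eq_empty_or_nonempty with rfl | hne
    · exact ⟨s, by simp⟩
    · obtain ⟨e, rfl⟩ := hd_count.exists_eq_range hne
      obtain ⟨t, ht⟩ := 𝔰.exists_upper_bound hmax fun n => w (e n)
      exact ⟨t, by rintro _ ⟨n, rfl⟩; exact ht n⟩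
  refine ⟨s', ?_⟩
  have hD : 𝔰.r s '' (V ∩ 𝔰.inducedSet) ⊆ closure (𝔰.r s '' (V ∩ range (𝔰.r s'))) := by
    rintro _ ⟨x, hx, rfl⟩
    have hcont : Continuous fun z : ↥(q '' (V ∩ 𝔰.inducedSet)) => ((z : range (𝔰.r s)) : K) :=
      continuous_subtype_val.comp continuous_subtype_val
    have hmem := hcont.continuousAt.continuousWithinAt.mem_closure_image
      (hd_dense ⟨q x, x, hx, rfl⟩)
    refine closure_mono ?_ hmem
    rintro _ ⟨z, hz, rfl⟩
    exact ⟨y z, ⟨hyV z, 𝔰.range_mono (hs' z hz) (hyw z)⟩, congrArg Subtype.val (hqy z)⟩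
  calc 𝔰.r s '' V ⊆ 𝔰.r s '' closure (V ∩ 𝔰.inducedSet) :=
        image_mono (𝔰.dense_inducedSet.open_subset_closure_inter hV)
    _ ⊆ closure (𝔰.r s '' (V ∩ 𝔰.inducedSet)) :=
        image_closure_subset_closure_image (𝔰.r s).continuous
    _ ⊆ _ := closure_minimal hD isClosed_closure

theorem exists_gt_approx (hmax : ∀ s : 𝔰.Γ, ∃ t, s < t) {U : ℕ → Set K} (hU : ∀ n, IsOpen (U n))
    (s : 𝔰.Γ) :
    ∃ s', s < s' ∧ ∀ n, 𝔰.r s '' U n ⊆ closure (𝔰.r s '' (U n ∩ range (𝔰.r s'))) := by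
  choose g hg using fun n => 𝔰.exists_approx_one hmax s (hU n)
  obtain ⟨t, ht⟩ := 𝔰.exists_upper_bound hmax g
  obtain ⟨t', h1, h2⟩ := 𝔰.directed s t
  obtain ⟨s', h3⟩ := hmax t'
  refine ⟨s', h1.trans_lt h3, fun n => (hg n).trans (closure_mono (image_mono ?_))⟩
  exact inter_subset_inter_right _ (𝔰.range_mono (((ht n).trans h2).trans h3.le))

variable [T2Space K]

theorem mapsTo_closure_of_approx {f : ℕ → 𝔰.Γ} {t : 𝔰.Γ} (hf : StrictMono f)
    (ht : IsLUB (range f) t) (hlim : ∀ x, Tendsto (fun n => 𝔰.r (f n) x) atTop (𝓝 (𝔰.r t x)))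
    {V : Set K}
    (hV : ∀ k, 𝔰.r (f k) '' V ⊆ closure (𝔰.r (f k) '' (V ∩ range (𝔰.r (f (k + 1)))))) :
    MapsTo (𝔰.r t) (closure V) (closure V) := by
  intro x hx
  set C := closure (V ∩ range (𝔰.r t)) with hC
  have hCc : IsCompact C := isClosed_closure.isCompact
  have hclosed : ∀ k, IsClosed {y | y ∈ C ∧ 𝔰.r (f k) y = 𝔰.r (f k) x} := fun k =>
    isClosed_closure.inter (isClosed_eq (𝔰.r (f k)).continuous continuous_const)
  have hne : (⋂ k, {y | y ∈ C ∧ 𝔰.r (f k) y = 𝔰.r (f k) x}).Nonempty := by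
    refine IsCompact.nonempty_iInter_of_sequence_nonempty_isCompact_isClosed _ ?_ ?_
      (hclosed 0).isCompact hclosed
    · rintro k y ⟨hy, he⟩
      have hle := hf.monotone k.le_succ
      refine ⟨hy, ?_⟩
      rw [← (𝔰.comp_eq_of_le _ _ hle y).1, he, (𝔰.comp_eq_of_le _ _ hle x).1]
    · intro k
      have h1 : 𝔰.r (f k) x ∈ closure (𝔰.r (f k) '' V) :=
        image_closure_subset_closure_image (𝔰.r (f k)).continuous ⟨x, hx, rfl⟩
      have h2 : closure (𝔰.r (f k) '' V) ⊆ 𝔰.r (f k) '' C := by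
        refine closure_minimal ((hV k).trans ?_) (hCc.image (𝔰.r (f k)).continuous).isClosed
        refine closure_minimal (image_mono ?_) (hCc.image (𝔰.r (f k)).continuous).isClosed
        exact (inter_subset_inter_right _ (𝔰.range_mono (ht.1 ⟨k + 1, rfl⟩))).trans
          subset_closure
      obtain ⟨y, hy, he⟩ := h2 h1
      exact ⟨y, hy, he⟩
  obtain ⟨y, hy⟩ := hne
  rw [mem_iInter] at hy
  have hyC : y ∈ C := (hy 0).1
  have hyr : y ∈ range (𝔰.r t) :=
    closure_minimal inter_subset_right (isCompact_range (𝔰.r t).continuous).isClosed hyC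
  have hyx : 𝔰.r t y = 𝔰.r t x :=
    tendsto_nhds_unique (hlim y) ((hlim x).congr fun k => ((hy k).2).symm)
  rw [← hyx, 𝔰.mem_range_iff.1 hyr]
  exact closure_mono inter_subset_left hyC

theorem exists_ge_mapsTo {U : ℕ → Set K} (hU : ∀ n, IsOpen (U n)) (s : 𝔰.Γ) :
    ∃ t, s ≤ t ∧ MapsTo (𝔰.r t) (⋂ n, closure (U n)) (⋂ n, closure (U n)) := by
  by_cases hmax : ∀ s : 𝔰.Γ, ∃ t, s < t
  · choose g hg1 hg2 using 𝔰.exists_gt_approx hmax hU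
    let f : ℕ → 𝔰.Γ := fun n => Nat.rec s (fun _ p => g p) n
    have hf : StrictMono f := strictMono_nat_of_lt_succ fun n => hg1 (f n)
    obtain ⟨t, ht, hlim⟩ := 𝔰.sup_seq f hf
    refine ⟨t, ht.1 ⟨0, rfl⟩, fun x hx => mem_iInter.2 fun n => ?_⟩
    exact 𝔰.mapsTo_closure_of_approx hf ht hlim (fun k => hg2 (f k) n) (mem_iInter.1 hx n)
  · push Not at hmax
    -- A maximal element `m` of a directed order is a greatest one, so `r m x = lim r s x = x`.
    obtain ⟨m, hm⟩ := hmax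
    have htop : ∀ a, a ≤ m := fun a => by
      obtain ⟨w, h1, h2⟩ := 𝔰.directed a m
      rcases h2.lt_or_eq with h | rfl
      · exact absurd h (hm w)
      · exact h1
    refine ⟨m, htop s, fun x hx => ?_⟩
    have hid : 𝔰.r m x = x := by
      have := 𝔰.isDirectedOrder
      refine tendsto_nhds_unique (tendsto_const_nhds.congr' ?_) (𝔰.tendsto_id x)
      filter_upwards [eventually_ge_atTop m] with a ha
      rw [le_antisymm (htop a) ha]
    rwa [hid]

/-- The skeleton in a closed set `G` formed by the restrictions of those `r t` that map `G` into
itself, provided such `t` are cofinal. -/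
def restrict {G : Set K} (hG : IsClosed G) (hcof : ∀ s, ∃ t, s ≤ t ∧ MapsTo (𝔰.r t) G G) :
    RetractionalSkeleton G where
  Γ := {t : 𝔰.Γ // MapsTo (𝔰.r t) G G}
  po := inferInstance
  ne := let ⟨t, _, ht⟩ := hcof (Classical.arbitrary 𝔰.Γ); ⟨⟨t, ht⟩⟩
  directed := fun s t => by
    obtain ⟨w, h1, h2⟩ := 𝔰.directed s t
    obtain ⟨w', h3, h4⟩ := hcof w
    exact ⟨⟨w', h4⟩, h1.trans h3, h2.trans h3⟩
  r := fun t => ⟨t.2.restrict, (𝔰.r t).continuous.restrict t.2⟩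
  isRetraction := fun s x => Subtype.ext (𝔰.isRetraction s x)
  metrizable := fun s => by
    have := 𝔰.metrizable s
    let j : range (fun x : G => s.2.restrict (𝔰.r s) G G x) → range (𝔰.r s) := fun z =>
      ⟨z.1.1, by obtain ⟨_, y, rfl⟩ := z; exact ⟨y, rfl⟩⟩
    have hj : IsEmbedding j := by
      refine IsEmbedding.of_comp (g := Subtype.val) ?_ continuous_subtype_val ?_
      · exact (continuous_subtype_val.comp continuous_subtype_val).subtype_mk _
      · have h : IsEmbedding fun z : range (fun x : G => s.2.restrict (𝔰.r s) G G x) => z.1.1 :=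
          IsEmbedding.subtypeVal.comp IsEmbedding.subtypeVal
        exact h
    exact hj.metrizableSpace
  tendsto_id := fun x => tendsto_subtype_rng.2 (𝔰.tendsto_id_of_cofinal hcof x)
  comp_eq_of_le := fun s t h x =>
    ⟨Subtype.ext (𝔰.comp_eq_of_le s t h x).1, Subtype.ext (𝔰.comp_eq_of_le s t h x).2⟩
  sup_seq := fun f hf => by
    obtain ⟨t, ht, hlim⟩ := 𝔰.sup_seq (fun n => (f n).1) hf
    have htG : MapsTo (𝔰.r t) G G := fun x hx =>
      hG.mem_of_tendsto (hlim x) (Eventually.of_forall fun n => (f n).2 hx)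
    refine ⟨⟨t, htG⟩, ⟨?_, fun b hb => ?_⟩, fun x => tendsto_subtype_rng.2 (hlim x)⟩
    · rintro _ ⟨n, rfl⟩
      exact ht.1 ⟨n, rfl⟩
    · exact ht.2 (by rintro _ ⟨n, rfl⟩; exact hb ⟨n, rfl⟩)

end RetractionalSkeleton

/-- Let `G = ⋂ n, closure (U n)` with each `U n` open in a compact Hausdorff space `K`.
If `D` is induced by an r-skeleton in `K`, then `G ∩ D` is dense in `G`, and consequently
`G ∩ D` is induced by an r-skeleton in the compact space `G`. -/
theorem inducedByRSkeleton_inter_iInter_closure (K : Type u) [TopologicalSpace K]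
    [CompactSpace K] [T2Space K] (U : ℕ → Set K) (hU : ∀ n, IsOpen (U n))
    (D : Set K) (hD : IsInducedByRSkeleton D) :
    (⋂ n, closure (U n)) ⊆ closure ((⋂ n, closure (U n)) ∩ D) ∧
      IsInducedByRSkeleton (Subtype.val ⁻¹' D : Set ↥(⋂ n, closure (U n))) := by
  obtain ⟨𝔰, rfl⟩ := hD
  have hG : IsClosed (⋂ n, closure (U n)) := isClosed_iInter fun n => isClosed_closure
  have hset : (𝔰.restrict hG (𝔰.exists_ge_mapsTo hU)).inducedSet =
      Subtype.val ⁻¹' 𝔰.inducedSet := by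
    ext x
    constructor
    · intro hx
      obtain ⟨t, y, rfl⟩ := mem_iUnion.1 hx
      exact mem_iUnion.2 ⟨t.1, y.1, rfl⟩
    · intro hx
      obtain ⟨s, hs⟩ := mem_iUnion.1 hx
      obtain ⟨t, hst, ht⟩ := 𝔰.exists_ge_mapsTo hU s
      exact mem_iUnion.2
        ⟨⟨t, ht⟩, x, Subtype.ext (𝔰.mem_range_iff.1 (𝔰.range_mono hst hs))⟩
  refine ⟨fun x hx => ?_, _, hset⟩
  have hdense := (𝔰.restrict hG (𝔰.exists_ge_mapsTo hU)).dense_inducedSet ⟨x, hx⟩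
  rw [hset] at hdense
  refine closure_mono ?_
    (continuous_subtype_val.continuousAt.continuousWithinAt.mem_closure_image hdense)
  rintro _ ⟨y, hy, rfl⟩
  exact ⟨y.2, hy⟩
end

section
/- Let K be a compact Hausdorff space, x ∈ K, and Γ an uncountable set. Let {g_k}_{k∈ℕ} and {f_γ}_{γ∈Γ} be families of Gδ points of K such that x belongs to the closure of {g_k : k∈ℕ} and to the closure of {f_γ : γ∈Γ}, and no sequence of points from {f_γ : γ∈Γ} converges to x. Then K does not have a retractional skeleton. -/
/-!
Write `D` for the union of the ranges of the retractions of a skeleton, and assume that the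
index set has no maximal element (otherwise the top retraction is the identity and `K` is itself
metrizable). Every sequence of indices then has an upper bound, and three facts follow.

* Every Gδ point lies in `D` (`exists_fixed_of_isGδ`): an index above suitable indices for
  countably many open sets with intersection `{p}` fixes `p`.
* `D` contains the closure of each of its countable subsets, because a single retraction fixes
  all points of the subset and has closed range; so `x ∈ D` by the hypothesis on `g`.
* `D` is Fréchet–Urysohn (`exists_seq_tendsto_of_mem_closure`), so some sequence of points of `f`
  converges to `x`, a contradiction.

For the third fact, build indices `s 0 < s 1 < ⋯` fixing `x` such that `x` lies in the closure of
the image under `r (s n)` of countably many points of `A` which are fixed by `r (s (n + 1))`. With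
`F` the closure of all the chosen points and `t = sup s n`, the compact sets
`{y ∈ F | r (s n) y = x}` are nonempty and decreasing. A common point `y` satisfies `r t y = x`,
while `F` is contained in the range of `r t`; hence `y = x`, so `x ∈ F`, and a sequence is found
inside the metrizable range of `r t`.
-/


open Filter Topology TopologicalSpace Set

universe u v

/-- A metrizable subspace is Fréchet–Urysohn, expressed in the ambient space. -/
lemma exists_seq_of_metrizable {K : Type u} [TopologicalSpace K] {M B : Set K}
    (hM : MetrizableSpace M) (hB : B ⊆ M) {x : K} (hx : x ∈ M) (hxB : x ∈ closure B) :
    ∃ u : ℕ → K, (∀ n, u n ∈ B) ∧ Tendsto u atTop (𝓝 x) := by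
  have h1 : (⟨x, hx⟩ : M) ∈ closure ((↑) ⁻¹' B : Set M) := by
    rw [closure_subtype, Subtype.image_preimage_coe, inter_eq_right.2 hB]
    exact hxB
  obtain ⟨u, hu, hlim⟩ := mem_closure_iff_seq_limit.1 h1
  exact ⟨fun n => u n, hu, (continuous_subtype_val.tendsto _).comp hlim⟩

namespace RetractionalSkeleton

attribute [local instance] RetractionalSkeleton.po RetractionalSkeleton.ne

variable {K : Type u} [TopologicalSpace K]

lemma fixed_mono (S : RetractionalSkeleton K) {s t : S.Γ} (hst : s ≤ t) {p : K}
    (hp : S.r s p = p) : S.r t p = p := by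
  have h := (S.comp_eq_of_le s t hst p).2
  rwa [hp] at h

lemma range_eq_univ_of_maximal (S : RetractionalSkeleton K) [T2Space K] {m : S.Γ}
    (hm : ∀ t, ¬ m < t) : Set.range (S.r m) = univ := by
  have htop : ∀ t, t ≤ m := by
    intro t
    obtain ⟨w, h1, h2⟩ := S.directed m t
    rcases h1.eq_or_lt with h | h
    · exact h ▸ h2
    · exact absurd h (hm w)
  refine eq_univ_of_forall fun p => ⟨p, ?_⟩
  have : IsDirectedOrder S.Γ := ⟨S.directed⟩
  refine tendsto_nhds_unique (tendsto_const_nhds.congr' ?_) (S.tendsto_id p)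
  filter_upwards [eventually_ge_atTop m] with t ht
  rw [le_antisymm ht (htop t)]

lemma exists_upper_bound_s9 (S : RetractionalSkeleton K) (hS : ∀ s : S.Γ, ∃ t, s < t)
    (u : ℕ → S.Γ) : ∃ t, ∀ n, u n ≤ t := by
  have hnext : ∀ s w : S.Γ, ∃ t, s < t ∧ w ≤ t := by
    intro s w
    obtain ⟨a, ha⟩ := hS s
    obtain ⟨b, hab, hwb⟩ := S.directed a w
    exact ⟨b, ha.trans_le hab, hwb⟩
  choose next h1 h2 using hnext
  let v : ℕ → S.Γ := fun n => Nat.rec (u 0) (fun n s => next s (u n)) n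
  have hv : StrictMono v := strictMono_nat_of_lt_succ fun n => h1 _ _
  obtain ⟨t, ht, -⟩ := S.sup_seq v hv
  exact ⟨t, fun n => (h2 (v n) (u n)).trans (ht.1 (mem_range_self (n + 1)))⟩

lemma exists_fixed_of_isGδ (S : RetractionalSkeleton K) (hS : ∀ s : S.Γ, ∃ t, s < t)
    {p : K} (hp : IsGδ ({p} : Set K)) : ∃ s, S.r s p = p := by
  have : IsDirectedOrder S.Γ := ⟨S.directed⟩
  obtain ⟨U, hU, hpU⟩ := isGδ_iff_eq_iInter_nat.1 hp
  have hmem : ∀ n, p ∈ U n := mem_iInter.1 (hpU ▸ mem_singleton p)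
  have h : ∀ n, ∃ s, ∀ t, s ≤ t → S.r t p ∈ U n := fun n =>
    eventually_atTop.1 (S.tendsto_id p ((hU n).mem_nhds (hmem n)))
  choose s hs using h
  obtain ⟨t, ht⟩ := S.exists_upper_bound_s9 hS s
  have : S.r t p ∈ ({p} : Set K) := by
    rw [hpU]
    exact mem_iInter.2 fun n => hs n t (ht n)
  exact ⟨t, this⟩

lemma exists_fixed_seq (S : RetractionalSkeleton K) (hS : ∀ s : S.Γ, ∃ t, s < t)
    (a : ℕ → K) (ha : ∀ n, ∃ s, S.r s (a n) = a n) : ∃ t, ∀ n, S.r t (a n) = a n := by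
  choose s hs using ha
  obtain ⟨t, ht⟩ := S.exists_upper_bound_s9 hS s
  exact ⟨t, fun n => S.fixed_mono (ht n) (hs n)⟩

lemma isClosed_fixed (S : RetractionalSkeleton K) [T2Space K] (s : S.Γ) :
    IsClosed {p | S.r s p = p} :=
  isClosed_eq (S.r s).continuous continuous_id

/-- One step of the construction: countably many points of `A` whose images under `r s`
approach `x`, together with a larger index fixing all of them. -/
lemma exists_step (S : RetractionalSkeleton K) (hS : ∀ s : S.Γ, ∃ t, s < t)
    {A : Set K} (hA : ∀ a ∈ A, ∃ s, S.r s a = a) {x : K} (hxA : x ∈ closure A)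
    (s : S.Γ) (hs : S.r s x = x) :
    ∃ t, s < t ∧ ∃ a : ℕ → K, (∀ k, a k ∈ A) ∧ (∀ k, S.r t (a k) = a k) ∧
      Tendsto (fun k => S.r s (a k)) atTop (𝓝 x) := by
  have hx : x ∈ closure (S.r s '' A) := by
    have := image_closure_subset_closure_image (S.r s).continuous (mem_image_of_mem (S.r s) hxA)
    rwa [hs] at this
  obtain ⟨u, hu, hlim⟩ := exists_seq_of_metrizable (S.metrizable s) (image_subset_range _ _)
    ⟨x, hs⟩ hx
  choose a haA hau using hu
  obtain ⟨t, ht⟩ := S.exists_fixed_seq hS a fun k => hA _ (haA k)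
  obtain ⟨s', hs'⟩ := hS s
  obtain ⟨w, h1, h2⟩ := S.directed s' t
  refine ⟨w, hs'.trans_le h1, a, haA, fun k => S.fixed_mono h2 (ht k), ?_⟩
  simpa only [hau] using hlim

/-- The set of points fixed by some retraction of the skeleton is Fréchet–Urysohn. -/
lemma exists_seq_tendsto_of_mem_closure (S : RetractionalSkeleton K) [CompactSpace K] [T2Space K]
    (hS : ∀ s : S.Γ, ∃ t, s < t) {A : Set K} (hA : ∀ a ∈ A, ∃ s, S.r s a = a) {x : K}
    (hxA : x ∈ closure A) (hxD : ∃ s, S.r s x = x) :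
    ∃ u : ℕ → K, (∀ n, u n ∈ A) ∧ Tendsto u atTop (𝓝 x) := by
  obtain ⟨s₀, hs₀⟩ := hxD
  choose next hlt a haA hafix hlim using S.exists_step hS hA hxA
  let σ : ℕ → {s : S.Γ // S.r s x = x} := fun n => Nat.rec ⟨s₀, hs₀⟩
    (fun _ s => ⟨next s.1 s.2, S.fixed_mono (hlt s.1 s.2).le s.2⟩) n
  have hσ : StrictMono fun n => (σ n).1 :=
    strictMono_nat_of_lt_succ fun n => hlt (σ n).1 (σ n).2
  obtain ⟨t, ht, htlim⟩ := S.sup_seq _ hσ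
  have hle : ∀ n, (σ n).1 ≤ t := fun n => ht.1 (mem_range_self n)
  let B : Set K := range fun q : ℕ × ℕ => a (σ q.1).1 (σ q.1).2 q.2
  have hBfix : B ⊆ {p | S.r t p = p} := by
    rintro _ ⟨⟨n, k⟩, rfl⟩
    exact S.fixed_mono (hle (n + 1)) (hafix (σ n).1 (σ n).2 k)
  have hFfix : closure B ⊆ {p | S.r t p = p} :=
    closure_minimal hBfix (S.isClosed_fixed t)
  let C : ℕ → Set K := fun n => closure B ∩ {y | S.r (σ n).1 y = x}
  have hCclosed : ∀ n, IsClosed (C n) := fun n =>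
    isClosed_closure.inter (isClosed_eq (S.r (σ n).1).continuous continuous_const)
  have hCne : ∀ n, (C n).Nonempty := by
    intro n
    have himg : IsClosed (S.r (σ n).1 '' closure B) :=
      (isClosed_closure.isCompact.image (S.r (σ n).1).continuous).isClosed
    obtain ⟨y, hy, hyx⟩ := himg.mem_of_tendsto (hlim (σ n).1 (σ n).2)
      (Eventually.of_forall fun k => mem_image_of_mem _ (subset_closure ⟨(n, k), rfl⟩))
    exact ⟨y, hy, hyx⟩
  have hCanti : ∀ n, C (n + 1) ⊆ C n := by
    rintro n y ⟨hyB, hy⟩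
    refine ⟨hyB, ?_⟩
    have h := (S.comp_eq_of_le (σ n).1 (σ (n + 1)).1 (hσ n.lt_succ_self).le y).1
    have hy' : S.r (σ (n + 1)).1 y = x := hy
    rw [hy', (σ n).2] at h
    exact h.symm
  obtain ⟨y, hy⟩ := IsCompact.nonempty_iInter_of_sequence_nonempty_isCompact_isClosed C hCanti
    hCne (hCclosed 0).isCompact hCclosed
  rw [mem_iInter] at hy
  have hty : S.r t y = x := by
    refine tendsto_nhds_unique (htlim y) (tendsto_const_nhds.congr fun n => ?_)
    exact ((hy n).2).symm
  have hyx : y = x := (hFfix (hy 0).1).symm.trans hty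
  have hxB : x ∈ closure B := hyx ▸ (hy 0).1
  obtain ⟨u, hu, hulim⟩ := exists_seq_of_metrizable (S.metrizable t)
    (fun b hb => ⟨b, hBfix hb⟩) ⟨x, hFfix hxB⟩ hxB
  refine ⟨u, fun n => ?_, hulim⟩
  obtain ⟨q, hq⟩ := hu n
  exact hq ▸ haA _ _ _

end RetractionalSkeleton

/-- Let `K` be compact Hausdorff, `x ∈ K`, `Γ` uncountable, `{g k}` and `{f γ}` families of
Gδ points of `K` with `x` in the closure of each family, such that no sequence of points
from `{f γ}` converges to `x`. Then `K` has no retractional skeleton. -/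
theorem not_hasRetractionalSkeleton_of_Gdelta_points (K : Type u) [TopologicalSpace K]
    [CompactSpace K] [T2Space K] (x : K) (Γ : Type v) [Uncountable Γ]
    (g : ℕ → K) (f : Γ → K)
    (hg : ∀ k, IsGδ ({g k} : Set K)) (hf : ∀ γ, IsGδ ({f γ} : Set K))
    (hxg : x ∈ closure (Set.range g)) (hxf : x ∈ closure (Set.range f))
    (hnoseq : ¬ ∃ u : ℕ → K, (∀ n, u n ∈ Set.range f) ∧ Tendsto u atTop (𝓝 x)) :
    ¬ HasRetractionalSkeleton K := by
  rintro ⟨S⟩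
  letI := S.po
  apply hnoseq
  by_cases hS : ∀ s : S.Γ, ∃ t, s < t
  · obtain ⟨t, ht⟩ := S.exists_fixed_seq hS g fun k => S.exists_fixed_of_isGδ hS (hg k)
    have hxt : S.r t x = x :=
      closure_minimal (range_subset_iff.2 ht) (S.isClosed_fixed t) hxg
    refine S.exists_seq_tendsto_of_mem_closure hS ?_ hxf ⟨t, hxt⟩
    rintro _ ⟨γ, rfl⟩
    exact S.exists_fixed_of_isGδ hS (hf γ)
  · push Not at hS
    obtain ⟨m, hm⟩ := hS
    have hr := S.range_eq_univ_of_maximal hm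
    exact exists_seq_of_metrizable (S.metrizable m) (hr ▸ subset_univ _) (hr ▸ mem_univ x) hxf
end

section
/- Let K be a compact Hausdorff space. Then K is a Corson compact if and only if K itself is induced by an r-skeleton in K (i.e., there is a retractional skeleton {r_s}_{s∈Γ} in K with ⋃_{s∈Γ} r_s[K] = K). Moreover, if K is Corson compact and D is any set induced by an r-skeleton in K, then D = K. -/
/-!
**Corson implies full skeleton.** Let `A ⊆ Σ(Γ)` be compact. Call a countable `B ⊆ Γ` good if
zeroing the coordinates outside `B` maps `A` into itself. Good sets are cofinal among countable sets
(`exists_good`, a closing-off argument) and stable under increasing countable unions, so the maps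
`x ↦ B.indicator x` form a skeleton; a point is fixed as soon as `B` contains its support.

**Uniqueness of the induced set.** A space with a full skeleton is countably tight (`tight`). An
induced set is always dense and contains the closures of its countable subsets, so in a Corson
compact space, which is countably tight by the first part, it is the whole space.

**Full skeleton implies Corson.** Fix a monotone map `g` sending finite sets of indices to upper
bounds. For an arbitrary set `S` of indices let `K_S` (`cl`) be the closure of the union of the
ranges of `r (g F)`, `F ⊆ S` finite. Countable tightness shows that the `r (g F)` separate points
of `K_S`, and then compactness gives a continuous retraction `R S` onto `K_S` with
`r (g F) ∘ R S = r (g F)` for all finite `F ⊆ S` (`exists_retraction`). By induction on the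
cardinality of `S`, there is a point-countable family of continuous functions on `K` separating the
points of `K_S` (`pointCountablySeparated_cl`): enumerate `S` in the order type of its cardinal and
collect the functions `f ∘ R S_{≤a} - f ∘ R S_{<a}`, where `f` runs through a family for `S_{≤a}`.
The family is point-countable since `R S_{≤a} x ≠ R S_{<a} x` for only countably many `a`
(`countable_jumps`). For `S` the set of all indices `K_S = K`, and evaluation at the family embeds
`K` into a `Σ`-product.
-/

open Filter Topology TopologicalSpace Set

universe u v

/-- `K` is a Corson compact space: it is homeomorphic to a compact subset of
`Σ(Γ) = {x ∈ ℝ^Γ : x γ ≠ 0 for at most countably many γ}` for some set `Γ`. -/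
def IsCorsonCompact (K : Type u) [TopologicalSpace K] : Prop :=
  ∃ (Γ : Type u) (A : Set (Γ → ℝ)), IsCompact A ∧
    (∀ x ∈ A, {γ | x γ ≠ 0}.Countable) ∧ Nonempty (K ≃ₜ ↥A)

namespace CorsonSkeleton

attribute [instance] RetractionalSkeleton.po RetractionalSkeleton.ne

variable {K : Type u} [TopologicalSpace K]

/-! ### Countable suprema in the index set -/

instance (𝔰 : RetractionalSkeleton K) : IsDirectedOrder 𝔰.Γ := ⟨𝔰.directed⟩

theorem mem_range_iff (𝔰 : RetractionalSkeleton K) {s : 𝔰.Γ} {x : K} :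
    x ∈ range (𝔰.r s) ↔ 𝔰.r s x = x :=
  ⟨by rintro ⟨y, rfl⟩; exact 𝔰.isRetraction s y, fun h => ⟨x, h⟩⟩

theorem fixed_of_le (𝔰 : RetractionalSkeleton K) {s t : 𝔰.Γ} (h : s ≤ t) {x : K}
    (hx : 𝔰.r s x = x) : 𝔰.r t x = x := by
  rw [← hx]; exact (𝔰.comp_eq_of_le s t h x).2

theorem isClosed_range [CompactSpace K] [T2Space K] (𝔰 : RetractionalSkeleton K) (s : 𝔰.Γ) :
    IsClosed (range (𝔰.r s)) :=
  (isCompact_range (𝔰.r s).continuous).isClosed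

/-- Weakly increasing sequences also have an upper bound `t` such that `r t` is determined by the
`r (f n)`. The axioms of a skeleton only speak of strictly increasing sequences; a weakly increasing
one is eventually constant or has a strictly increasing subsequence. -/
theorem exists_sup_of_monotone [T2Space K] (𝔰 : RetractionalSkeleton K) (f : ℕ → 𝔰.Γ)
    (hf : Monotone f) :
    ∃ t, (∀ n, f n ≤ t) ∧ ∀ y z : K, (∀ n, 𝔰.r (f n) y = 𝔰.r (f n) z) → 𝔰.r t y = 𝔰.r t z := by
  by_cases h : ∃ N, ∀ n, N ≤ n → f n = f N
  · obtain ⟨N, hN⟩ := h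
    refine ⟨f N, fun n => ?_, fun y z H => H N⟩
    rcases le_total n N with h | h
    · exact hf h
    · exact (hN n h).le
  · push Not at h
    have h' : ∀ N, ∃ n, N < n ∧ f N < f n := by
      intro N
      obtain ⟨n, hn, hne⟩ := h N
      refine ⟨n, lt_of_le_of_ne hn ?_, lt_of_le_of_ne (hf hn) (Ne.symm hne)⟩
      rintro rfl; exact hne rfl
    choose φ hφ hfφ using h'
    let ψ : ℕ → ℕ := fun n => φ^[n] 0
    have hψs : ∀ n, ψ (n + 1) = φ (ψ n) := fun n => Function.iterate_succ_apply' φ n 0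
    have hψ : StrictMono ψ := strictMono_nat_of_lt_succ fun n => by rw [hψs]; exact hφ _
    have hfψ : StrictMono (f ∘ ψ) :=
      strictMono_nat_of_lt_succ fun n => by simp only [Function.comp, hψs]; exact hfφ _
    obtain ⟨t, ht, hlim⟩ := 𝔰.sup_seq _ hfψ
    refine ⟨t, fun n => (hf (hψ.id_le n)).trans (ht.1 ⟨n, rfl⟩), fun y z H => ?_⟩
    refine tendsto_nhds_unique (hlim y) ?_
    have := hlim z
    simpa only [Function.comp, H] using this

theorem exists_upper_bound [T2Space K] (𝔰 : RetractionalSkeleton K) {S : Set 𝔰.Γ}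
    (hS : S.Countable) : ∃ t, ∀ s ∈ S, s ≤ t := by
  rcases S.eq_empty_or_nonempty with rfl | hne
  · exact ⟨Classical.arbitrary _, by simp⟩
  obtain ⟨e, rfl⟩ := hS.exists_eq_range hne
  choose ub h1 h2 using 𝔰.directed
  let v : ℕ → 𝔰.Γ := fun n => Nat.rec (e 0) (fun n w => ub w (e (n + 1))) n
  have hv : Monotone v := monotone_nat_of_le_succ fun n => h1 _ _
  obtain ⟨t, ht, -⟩ := exists_sup_of_monotone 𝔰 v hv
  refine ⟨t, ?_⟩
  rintro _ ⟨n, rfl⟩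
  refine le_trans ?_ (ht n)
  cases n with
  | zero => exact le_rfl
  | succ n => exact h2 _ _

/-- A countable subset of the induced set is fixed by a single retraction of the skeleton. -/
theorem exists_fixing [T2Space K] (𝔰 : RetractionalSkeleton K) (s : 𝔰.Γ) {C : Set K}
    (hC : C.Countable) (hD : C ⊆ 𝔰.inducedSet) :
    ∃ t, s ≤ t ∧ ∀ x ∈ C, 𝔰.r t x = x := by
  have h : ∀ x : C, ∃ s, 𝔰.r s x = x := fun x => by
    obtain ⟨s, hs⟩ := mem_iUnion.1 (hD x.2)
    exact ⟨s, (mem_range_iff 𝔰).1 hs⟩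
  choose σ hσ using h
  have := hC.to_subtype
  obtain ⟨t, ht⟩ := exists_upper_bound 𝔰 ((countable_range σ).insert s)
  exact ⟨t, ht _ (mem_insert _ _), fun x hx =>
    fixed_of_le 𝔰 (ht _ (mem_insert_of_mem _ ⟨⟨x, hx⟩, rfl⟩)) (hσ ⟨x, hx⟩)⟩

/-! ### Countable tightness -/

/-- Some countable subset of `A` has an image under `r s` that is dense in `r s '' A`, the range of
`r s` being compact metrizable. -/
theorem exists_countable_dense_image [CompactSpace K] [T2Space K] (𝔰 : RetractionalSkeleton K)
    (s : 𝔰.Γ) (A : Set K) :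
    ∃ C ⊆ A, C.Countable ∧ 𝔰.r s '' A ⊆ closure (𝔰.r s '' C) := by
  have := 𝔰.metrizable s
  have : CompactSpace (range (𝔰.r s)) :=
    isCompact_iff_compactSpace.1 (isCompact_range (𝔰.r s).continuous)
  let := metrizableSpaceMetric (range (𝔰.r s))
  let q : K → range (𝔰.r s) := rangeFactorization (𝔰.r s)
  obtain ⟨t, htA, htc, hcl⟩ :=
    (IsSeparable.of_separableSpace (q '' A)).exists_countable_dense_subset
  obtain ⟨C, hCA, hC⟩ := SurjOn.exists_bijOn_subset (f := q) (s := A) (t := t) htA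
  refine ⟨C, hCA, ?_, ?_⟩
  · exact (countable_of_injective_of_countable_image hC.injOn (by rwa [hC.image_eq]))
  · rintro _ ⟨a, ha, rfl⟩
    have h1 : q a ∈ closure (q '' C) := by rw [hC.image_eq]; exact hcl (mem_image_of_mem _ ha)
    have h2 := image_closure_subset_closure_image (s := q '' C) continuous_subtype_val
      (mem_image_of_mem _ h1)
    rwa [← image_comp] at h2

/-- A compact space whose every point is induced by the skeleton is countably tight. -/
theorem tight [CompactSpace K] [T2Space K] (𝔰 : RetractionalSkeleton K)
    (hfull : 𝔰.inducedSet = univ) (A : Set K) (y : K) (hy : y ∈ closure A) :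
    ∃ C ⊆ A, C.Countable ∧ y ∈ closure C := by
  choose B hBA hBc hBd using fun s => exists_countable_dense_image 𝔰 s A
  choose next hnext hfix using fun s =>
    exists_fixing 𝔰 s (hBc s) (by rw [hfull]; exact subset_univ _)
  obtain ⟨s₀, -, hs₀⟩ := exists_fixing 𝔰 (Classical.arbitrary _) (countable_singleton y)
    (by rw [hfull]; exact subset_univ _)
  let f : ℕ → 𝔰.Γ := fun n => next^[n] s₀
  have hfs : ∀ n, f (n + 1) = next (f n) := fun n => Function.iterate_succ_apply' next n s₀
  have hf : Monotone f := monotone_nat_of_le_succ fun n => by rw [hfs]; exact hnext _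
  obtain ⟨t, ht, hdet⟩ := exists_sup_of_monotone 𝔰 f hf
  let C : Set K := ⋃ n, B (f n)
  refine ⟨C, iUnion_subset fun n => hBA _, countable_iUnion fun n => hBc _, ?_⟩
  -- `r t` fixes `y` and every point of `closure C`.
  have hyt : 𝔰.r t y = y := fixed_of_le 𝔰 (ht 0) (hs₀ y rfl)
  have hCt : closure C ⊆ range (𝔰.r t) := by
    refine closure_minimal (iUnion_subset fun n x hx => ?_) (isClosed_range 𝔰 t)
    refine (mem_range_iff 𝔰).2 (fixed_of_le 𝔰 (ht (n + 1)) ?_)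
    rw [hfs]; exact hfix _ _ hx
  -- By compactness some point of `closure C` has the same image as `y` under all `r (f n)`.
  let F : ℕ → Set K := fun n => closure C ∩ {z | 𝔰.r (f n) z = 𝔰.r (f n) y}
  have hFc : ∀ n, IsClosed (F n) := fun n =>
    isClosed_closure.inter (isClosed_eq (𝔰.r _).continuous continuous_const)
  have hne : (⋂ n, F n).Nonempty := by
    refine IsCompact.nonempty_iInter_of_directed_nonempty_isCompact_isClosed F ?_ ?_
      (fun n => (hFc n).isCompact) hFc
    · refine Antitone.directed_ge fun m n hmn z hz => ⟨hz.1, ?_⟩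
      have h := hf hmn
      change 𝔰.r (f m) z = 𝔰.r (f m) y
      rw [← (𝔰.comp_eq_of_le _ _ h z).1, hz.2, (𝔰.comp_eq_of_le _ _ h y).1]
    · intro n
      have h1 : 𝔰.r (f n) y ∈ closure (𝔰.r (f n) '' A) :=
        image_closure_subset_closure_image (𝔰.r _).continuous (mem_image_of_mem _ hy)
      have h2 : closure (𝔰.r (f n) '' A) ⊆ 𝔰.r (f n) '' closure C := by
        refine closure_minimal ((hBd (f n)).trans ?_)
          (isClosed_closure.isCompact.image (𝔰.r _).continuous).isClosed
        exact closure_minimal (image_mono ((subset_iUnion (fun n => B (f n)) n).trans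
          subset_closure)) (isClosed_closure.isCompact.image (𝔰.r _).continuous).isClosed
      obtain ⟨z, hz, hzy⟩ := h2 h1
      exact ⟨z, hz, hzy⟩
  obtain ⟨z, hz⟩ := hne
  have hz' := mem_iInter.1 hz
  have h1 := hdet z y fun n => (hz' n).2
  rw [hyt, (mem_range_iff 𝔰).1 (hCt (hz' 0).1)] at h1
  rw [← h1]; exact (hz' 0).1

/-- An induced set is dense and contains the closures of its countable subsets; hence it is
everything in a countably tight space. -/
theorem inducedSet_eq_univ [CompactSpace K] [T2Space K] (𝔰 : RetractionalSkeleton K)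
    (htight : ∀ (A : Set K) (y : K), y ∈ closure A → ∃ C ⊆ A, C.Countable ∧ y ∈ closure C) :
    𝔰.inducedSet = univ := by
  refine eq_univ_of_forall fun x => ?_
  have hx : x ∈ closure 𝔰.inducedSet :=
    mem_closure_of_tendsto (𝔰.tendsto_id x)
      (Eventually.of_forall fun s => mem_iUnion.2 ⟨s, mem_range_self x⟩)
  obtain ⟨C, hC, hCc, hxC⟩ := htight _ x hx
  obtain ⟨t, -, ht⟩ := exists_fixing 𝔰 (Classical.arbitrary _) hCc hC
  exact mem_iUnion.2 ⟨t, closure_minimal (fun y hy => (mem_range_iff 𝔰).2 (ht y hy))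
    (isClosed_range 𝔰 t) hxC⟩

/-! ### A Corson compact space has a full skeleton -/

/-- For a compact `A ⊆ Σ(Γ)`, every countable `B₀ ⊆ Γ` lies in a countable `B` such that setting the
coordinates outside `B` to zero maps `A` into itself. -/
theorem exists_good {Γ : Type u} {A : Set (Γ → ℝ)} (hA : IsCompact A)
    (hsupp : ∀ x ∈ A, {γ | x γ ≠ 0}.Countable) {B₀ : Set Γ} (hB₀ : B₀.Countable) :
    ∃ B, B₀ ⊆ B ∧ B.Countable ∧ ∀ x ∈ A, B.indicator x ∈ A := by
  have hres : ∀ B : Set Γ, Continuous (B.domRestrict : (Γ → ℝ) → (B → ℝ)) := fun B =>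
    continuous_pi fun b => continuous_apply (b : Γ)
  have step : ∀ B : Set Γ, ∃ B', B ⊆ B' ∧ (B.Countable → B'.Countable ∧
      ∀ x ∈ A, B.domRestrict x ∈
        closure (B.domRestrict '' (A ∩ {z : Γ → ℝ | ∀ γ ∉ B', z γ = 0}) : Set (B → ℝ))) := by
    intro B
    by_cases hB : B.Countable
    · have := hB.to_subtype
      obtain ⟨t, htA, htc, hcl⟩ :=
        (IsSeparable.of_separableSpace (B.domRestrict '' A)).exists_countable_dense_subset
      obtain ⟨D, hDA, hD⟩ := SurjOn.exists_bijOn_subset (f := B.domRestrict) (s := A) (t := t) htA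
      have hDc : D.Countable :=
        countable_of_injective_of_countable_image hD.injOn (by rwa [hD.image_eq])
      refine ⟨B ∪ ⋃ d ∈ D, {γ | d γ ≠ 0}, subset_union_left, fun _ => ⟨hB.union
        (hDc.biUnion fun d hd => hsupp d (hDA hd)), fun x hx => ?_⟩⟩
      have h1 := hcl (mem_image_of_mem _ hx)
      rw [← hD.image_eq] at h1
      refine closure_mono (image_mono ?_) h1
      refine fun d hd => ⟨hDA hd, fun γ hγ => ?_⟩
      by_contra hne
      exact hγ (mem_union_right _ (mem_biUnion hd hne))
    · exact ⟨B, subset_rfl, fun h => absurd h hB⟩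
  choose next hsub hnext using step
  let f : ℕ → Set Γ := fun n => next^[n] B₀
  have hfs : ∀ n, f (n + 1) = next (f n) := fun n => Function.iterate_succ_apply' next n B₀
  have hf : Monotone f := monotone_nat_of_le_succ fun n => by rw [hfs]; exact hsub _
  have hfc : ∀ n, (f n).Countable := by
    intro n
    induction n with
    | zero => exact hB₀
    | succ n ih => rw [hfs]; exact (hnext _ ih).1
  refine ⟨⋃ n, f n, subset_iUnion f 0, countable_iUnion hfc, fun x hx => ?_⟩
  -- By compactness some point of `A` supported in `⋃ n, f n` agrees with `x` on every `f n`; it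
  -- equals the truncation of `x`.
  let F : ℕ → Set (Γ → ℝ) := fun n =>
    (A ∩ {z | ∀ γ ∉ ⋃ n, f n, z γ = 0}) ∩ {z | ∀ γ ∈ f n, z γ = x γ}
  have hS : IsCompact (A ∩ {z : Γ → ℝ | ∀ γ ∉ ⋃ n, f n, z γ = 0}) := by
    refine hA.inter_right ?_
    simp only [ofPred_forall]
    exact isClosed_iInter fun γ => isClosed_iInter fun _ =>
      isClosed_eq (continuous_apply γ) continuous_const
  have hFk : ∀ n, IsCompact (F n) := fun n => by
    refine hS.inter_right ?_
    simp only [ofPred_forall]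
    exact isClosed_iInter fun γ => isClosed_iInter fun _ =>
      isClosed_eq (continuous_apply γ) continuous_const
  have hne : (⋂ n, F n).Nonempty := by
    refine IsCompact.nonempty_iInter_of_directed_nonempty_isCompact_isClosed F ?_ ?_ hFk
      (fun n => (hFk n).isClosed)
    · exact Antitone.directed_ge fun m n hmn z hz => ⟨hz.1, fun γ hγ => hz.2 γ (hf hmn hγ)⟩
    · intro n
      have h1 := (hnext _ (hfc n)).2 x hx
      have h2 : (f n).domRestrict x ∈
          (f n).domRestrict '' (A ∩ {z : Γ → ℝ | ∀ γ ∉ ⋃ n, f n, z γ = 0}) := by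
        refine closure_minimal (image_mono ?_) (hS.image (hres _)).isClosed h1
        refine inter_subset_inter_right _ fun z hz γ hγ => hz γ fun hγ' => hγ ?_
        rw [← hfs] at hγ'
        exact mem_iUnion.2 ⟨n + 1, hγ'⟩
      obtain ⟨z, hz, hzx⟩ := h2
      exact ⟨z, hz, fun γ hγ => congrFun hzx ⟨γ, hγ⟩⟩
  obtain ⟨z, hz⟩ := hne
  have hz' := mem_iInter.1 hz
  convert (hz' 0).1.1 using 1
  funext γ
  by_cases hγ : γ ∈ ⋃ n, f n
  · rw [indicator_of_mem hγ]
    obtain ⟨n, hn⟩ := mem_iUnion.1 hγ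
    exact ((hz' n).2 γ hn).symm
  · rw [indicator_of_notMem hγ]
    exact ((hz' 0).1.2 γ hγ).symm

theorem continuous_indicator_left {Γ : Type u} (B : Set Γ) :
    Continuous fun x : Γ → ℝ => B.indicator x := by
  refine continuous_pi fun γ => ?_
  by_cases hγ : γ ∈ B
  · simpa only [indicator_of_mem hγ] using continuous_apply γ
  · simpa only [indicator_of_notMem hγ] using continuous_const

/-- The restrictions to good countable sets of coordinates form a skeleton of a Corson compact
space, and every point is fixed by the restriction to a good set containing its support. -/
theorem exists_full_of_corson [CompactSpace K] (h : IsCorsonCompact K) :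
    ∃ 𝔰 : RetractionalSkeleton K, 𝔰.inducedSet = univ := by
  obtain ⟨Γ, A, hA, hsupp, ⟨e⟩⟩ := h
  let φ : K → Γ → ℝ := fun x => e x
  have hφ : Continuous φ := continuous_subtype_val.comp e.continuous
  have hinj : Function.Injective φ := Subtype.val_injective.comp e.injective
  have hemb : IsEmbedding φ := IsEmbedding.subtypeVal.comp e.isEmbedding
  let G : Type u := {B : Set Γ // B.Countable ∧ ∀ x ∈ A, B.indicator x ∈ A}
  have hgood : ∀ {B₀ : Set Γ}, B₀.Countable → ∃ B : G, B₀ ⊆ B.1 := fun h => by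
    obtain ⟨B, h1, h2, h3⟩ := exists_good hA hsupp h
    exact ⟨⟨B, h2, h3⟩, h1⟩
  let r : G → C(K, K) := fun B =>
    ⟨fun x => e.symm ⟨B.1.indicator (φ x), B.2.2 _ (e x).2⟩,
      e.symm.continuous.comp (((continuous_indicator_left B.1).comp hφ).subtype_mk _)⟩
  have hr : ∀ B x, φ (r B x) = B.1.indicator (φ x) := fun B x => by
    simp only [φ, r, ContinuousMap.coe_mk, Homeomorph.apply_symm_apply]
  have hfix : ∀ (B : G) x, {γ | φ x γ ≠ 0} ⊆ B.1 → r B x = x := fun B x hx => by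
    apply hinj
    rw [hr]
    exact indicator_eq_self.2 hx
  have hcomp : ∀ s t : G, s ≤ t → ∀ x : K, r s (r t x) = r s x ∧ r t (r s x) = r s x := by
    intro s t hst x
    have hst' : s.1 ⊆ t.1 := hst
    constructor <;> apply hinj <;> simp only [hr, indicator_indicator]
    · rw [inter_eq_left.2 hst']
    · rw [inter_eq_right.2 hst']
  have hex : ∀ x, ∃ B : G, {γ | φ x γ ≠ 0} ⊆ B.1 := fun x => hgood (hsupp _ (e x).2)
  have hne : Nonempty G := let ⟨B, _⟩ := hgood countable_empty; ⟨B⟩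
  refine ⟨{ Γ := G, directed := ?_, r := r, isRetraction := ?_, metrizable := ?_, tendsto_id := ?_,
            comp_eq_of_le := hcomp, sup_seq := ?_ }, ?_⟩
  · intro s t
    obtain ⟨B, hB⟩ := hgood (s.2.1.union t.2.1)
    exact ⟨B, subset_union_left.trans hB, subset_union_right.trans hB⟩
  · exact fun s x => (hcomp s s le_rfl x).1
  · intro s
    have := s.2.1.to_subtype
    have : CompactSpace (range (r s)) :=
      isCompact_iff_compactSpace.1 (isCompact_range (r s).continuous)
    let q : range (r s) → (s.1 → ℝ) := fun x => s.1.domRestrict (φ x)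
    have hq : Continuous q := continuous_pi fun b =>
      (continuous_apply (b : Γ)).comp (hφ.comp continuous_subtype_val)
    have hqi : Function.Injective q := by
      rintro ⟨_, x, rfl⟩ ⟨_, y, rfl⟩ hxy
      apply Subtype.ext
      apply hinj
      simp only [hr]
      funext γ
      by_cases hγ : γ ∈ s.1
      · have : φ (r s x) γ = φ (r s y) γ := congrFun hxy ⟨γ, hγ⟩
        simpa only [hr] using this
      · simp only [indicator_of_notMem hγ]
    exact (hq.isClosedEmbedding hqi).isEmbedding.metrizableSpace
  · intro x
    obtain ⟨B, hB⟩ := hex x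
    refine tendsto_const_nhds.congr' ?_
    filter_upwards [eventually_ge_atTop B] with C hC
    exact (hfix C x (hB.trans hC)).symm
  · intro f hf
    have hc : (⋃ n, (f n).1).Countable := countable_iUnion fun n => (f n).2.1
    have hmono : ∀ {m n}, m ≤ n → (f m).1 ⊆ (f n).1 := fun h => hf.monotone h
    have hlim : ∀ x : Γ → ℝ, Tendsto (fun n => (f n).1.indicator x) atTop
        (𝓝 ((⋃ n, (f n).1).indicator x)) := by
      intro x
      refine tendsto_pi_nhds.2 fun γ => ?_
      by_cases hγ : γ ∈ ⋃ n, (f n).1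
      · rw [indicator_of_mem hγ]
        obtain ⟨N, hN⟩ := mem_iUnion.1 hγ
        refine tendsto_const_nhds.congr' ?_
        filter_upwards [eventually_ge_atTop N] with n hn
        rw [indicator_of_mem (hmono hn hN)]
      · rw [indicator_of_notMem hγ]
        refine tendsto_const_nhds.congr fun n => ?_
        rw [indicator_of_notMem fun h => hγ (mem_iUnion.2 ⟨n, h⟩)]
    refine ⟨⟨⋃ n, (f n).1, hc, fun x hx => ?_⟩, ⟨?_, ?_⟩, ?_⟩
    · exact hA.isClosed.mem_of_tendsto (hlim x) (Eventually.of_forall fun n => (f n).2.2 x hx)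
    · rintro _ ⟨n, rfl⟩
      exact subset_iUnion (fun n => (f n).1) n
    · intro B hB
      exact iUnion_subset fun n => hB ⟨n, rfl⟩
    · intro x
      rw [hemb.tendsto_nhds_iff]
      simp only [Function.comp_def, hr]
      exact hlim _
  · refine eq_univ_of_forall fun x => ?_
    obtain ⟨B, hB⟩ := hex x
    exact mem_iUnion.2 ⟨B, x, hfix B x hB⟩

/-! ### Retractions attached to arbitrary sets of indices -/

/-- A monotone choice of upper bounds for finite sets of indices. -/
theorem exists_monotone_bound (Γ : Type u) [PartialOrder Γ] [Nonempty Γ] [IsDirectedOrder Γ] :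
    ∃ g : Finset Γ → Γ, Monotone g ∧ ∀ s, s ≤ g {s} := by
  classical
  have step : ∀ (F : Finset Γ) (ih : ∀ t ⊂ F, Γ),
      ∃ b, (∀ s ∈ F, s ≤ b) ∧ ∀ (t : Finset Γ) (h : t ⊂ F), ih t h ≤ b := by
    intro F ih
    obtain ⟨b, hb⟩ := Finset.exists_le
      (F ∪ F.ssubsets.attach.image fun t : {t // t ∈ F.ssubsets} => ih t.1 (Finset.mem_ssubsets.1 t.2))
    exact ⟨b, fun s hs => hb s (Finset.mem_union_left _ hs), fun t h =>
      hb _ (Finset.mem_union_right _ (Finset.mem_image.2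
        ⟨⟨t, Finset.mem_ssubsets.2 h⟩, Finset.mem_attach _ _, rfl⟩))⟩
  choose H hH1 hH2 using step
  refine ⟨Finset.strongInduction H, fun F F' hFF' => ?_, fun s => ?_⟩
  · rcases eq_or_ssubset_of_subset hFF' with rfl | hss
    · exact le_rfl
    · rw [Finset.strongInduction_eq H F']
      exact hH2 F' (fun t _ => Finset.strongInduction H t) F hss
  · rw [Finset.strongInduction_eq H {s}]
    exact hH1 _ _ s (Finset.mem_singleton_self s)

section Extended

variable (𝔰 : RetractionalSkeleton K) (g : Finset 𝔰.Γ → 𝔰.Γ)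

/-- The closed set `K_S` generated by a set `S` of indices: the closure of the union of the ranges
of `r (g F)` for finite `F ⊆ S`. -/
def cl (S : Set 𝔰.Γ) : Set K :=
  closure (⋃ F : {F : Finset 𝔰.Γ // (F : Set 𝔰.Γ) ⊆ S}, range (𝔰.r (g F.1)))

variable {𝔰 g}

theorem isClosed_cl (S : Set 𝔰.Γ) : IsClosed (cl 𝔰 g S) := isClosed_closure

theorem cl_mono {S T : Set 𝔰.Γ} (h : S ⊆ T) : cl 𝔰 g S ⊆ cl 𝔰 g T :=
  closure_mono (iUnion_subset fun F =>
    subset_iUnion (fun F : {F : Finset 𝔰.Γ // (F : Set 𝔰.Γ) ⊆ T} => range (𝔰.r (g F.1)))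
      ⟨F.1, F.2.trans h⟩)

theorem mem_cl {S : Set 𝔰.Γ} {F : Finset 𝔰.Γ} (hF : (F : Set 𝔰.Γ) ⊆ S) (x : K) :
    𝔰.r (g F) x ∈ cl 𝔰 g S :=
  subset_closure (mem_iUnion.2 ⟨⟨F, hF⟩, mem_range_self x⟩)

theorem cl_subset_range [CompactSpace K] [T2Space K] {S : Set 𝔰.Γ} {t : 𝔰.Γ}
    (h : ∀ F : Finset 𝔰.Γ, (F : Set 𝔰.Γ) ⊆ S → g F ≤ t) : cl 𝔰 g S ⊆ range (𝔰.r t) := by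
  refine closure_minimal (iUnion_subset ?_) (isClosed_range 𝔰 t)
  rintro ⟨F, hF⟩ x hx
  exact (mem_range_iff 𝔰).2 (fixed_of_le 𝔰 (h F hF) ((mem_range_iff 𝔰).1 hx))

theorem cl_univ (hg1 : ∀ s, s ≤ g {s}) (hfull : 𝔰.inducedSet = univ) :
    cl 𝔰 g univ = univ := by
  refine eq_univ_of_forall fun x => ?_
  obtain ⟨s, hs⟩ := mem_iUnion.1 (hfull ▸ mem_univ x : x ∈ 𝔰.inducedSet)
  rw [← fixed_of_le 𝔰 (hg1 s) ((mem_range_iff 𝔰).1 hs)]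
  exact mem_cl (subset_univ _) x

/-- By countable tightness, each point of `K_S` lies in `K_C` for some countable `C ⊆ S`. -/
theorem exists_countable_mem_cl [CompactSpace K] [T2Space K] (hfull : 𝔰.inducedSet = univ)
    {S : Set 𝔰.Γ} {y : K} (hy : y ∈ cl 𝔰 g S) :
    ∃ C ⊆ S, C.Countable ∧ y ∈ cl 𝔰 g C := by
  obtain ⟨D, hDS, hDc, hyD⟩ := tight 𝔰 hfull _ y hy
  choose F hF using fun d : D => mem_iUnion.1 (hDS d.2)
  have := hDc.to_subtype
  refine ⟨⋃ d, ((F d).1 : Set 𝔰.Γ), iUnion_subset fun d => (F d).2,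
    countable_iUnion fun d => (F d).1.countable_toSet, ?_⟩
  refine closure_minimal (fun d hd => ?_) (isClosed_cl _) hyD
  have hfix : 𝔰.r (g (F ⟨d, hd⟩).1) d = d := (mem_range_iff 𝔰).1 (hF ⟨d, hd⟩)
  rw [← hfix]
  exact mem_cl (subset_iUnion (fun d => ((F d).1 : Set 𝔰.Γ)) ⟨d, hd⟩) d

/-- The retractions `r (g F)`, `F ⊆ S` finite, separate the points of `K_S`. -/
theorem cl_separated [CompactSpace K] [T2Space K] (hg : Monotone g)
    (hfull : 𝔰.inducedSet = univ) {S : Set 𝔰.Γ} {y z : K} (hy : y ∈ cl 𝔰 g S)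
    (hz : z ∈ cl 𝔰 g S)
    (h : ∀ F : Finset 𝔰.Γ, (F : Set 𝔰.Γ) ⊆ S → 𝔰.r (g F) y = 𝔰.r (g F) z) : y = z := by
  classical
  obtain ⟨C₁, hC₁, hc₁, hy'⟩ := exists_countable_mem_cl hfull hy
  obtain ⟨C₂, hC₂, hc₂, hz'⟩ := exists_countable_mem_cl hfull hz
  obtain ⟨C, hCS, hCc, hyC, hzC⟩ : ∃ C ⊆ S, C.Countable ∧ y ∈ cl 𝔰 g C ∧ z ∈ cl 𝔰 g C :=
    ⟨C₁ ∪ C₂, union_subset hC₁ hC₂, hc₁.union hc₂, cl_mono subset_union_left hy',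
      cl_mono subset_union_right hz'⟩
  -- An increasing sequence of finite sets exhausting `C`.
  obtain ⟨E, hE, hEC, hEx⟩ : ∃ E : ℕ → Finset 𝔰.Γ, Monotone E ∧ (∀ n, (E n : Set 𝔰.Γ) ⊆ C) ∧
      ∀ F : Finset 𝔰.Γ, (F : Set 𝔰.Γ) ⊆ C → ∃ n, F ⊆ E n := by
    rcases C.eq_empty_or_nonempty with rfl | hne
    · refine ⟨fun _ => ∅, monotone_const, by simp, fun F hF => ⟨0, ?_⟩⟩
      rw [← Finset.coe_subset]
      simpa using hF
    · obtain ⟨e, rfl⟩ := hCc.exists_eq_range hne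
      have hm : Monotone fun n => (Finset.range n).image e := fun m n hmn =>
        Finset.image_subset_image (Finset.range_mono hmn)
      refine ⟨_, hm, fun n => ?_, fun F => ?_⟩
      · rw [Finset.coe_image]; exact image_subset_range _ _
      · induction F using Finset.induction_on with
        | empty => exact fun _ => ⟨0, by simp⟩
        | insert a F _ ih =>
          intro hF
          rw [Finset.coe_insert, insert_subset_iff] at hF
          obtain ⟨n, hn⟩ := ih hF.2
          obtain ⟨k, rfl⟩ := hF.1
          refine ⟨max n (k + 1), Finset.insert_subset ?_ (hn.trans (hm (le_max_left _ _)))⟩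
          exact Finset.mem_image.2 ⟨k, Finset.mem_range.2 (by omega), rfl⟩
  obtain ⟨t, ht, hdet⟩ := exists_sup_of_monotone 𝔰 (g ∘ E) (hg.comp hE)
  have hsub : cl 𝔰 g C ⊆ range (𝔰.r t) := cl_subset_range fun F hF => by
    obtain ⟨n, hn⟩ := hEx F hF
    exact (hg hn).trans (ht n)
  rw [← (mem_range_iff 𝔰).1 (hsub hyC), ← (mem_range_iff 𝔰).1 (hsub hzC)]
  exact hdet y z fun n => h _ ((hEC n).trans hCS)

theorem exists_limit [CompactSpace K] [T2Space K] (hg : Monotone g) (S : Set 𝔰.Γ) (x : K) :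
    ∃ y ∈ cl 𝔰 g S, ∀ F : Finset 𝔰.Γ, (F : Set 𝔰.Γ) ⊆ S → 𝔰.r (g F) y = 𝔰.r (g F) x := by
  classical
  let ι := {F : Finset 𝔰.Γ // (F : Set 𝔰.Γ) ⊆ S}
  let P : ι → Set K := fun F => cl 𝔰 g S ∩ {y | 𝔰.r (g F.1) y = 𝔰.r (g F.1) x}
  have : Nonempty ι := ⟨⟨∅, by simp⟩⟩
  have hPc : ∀ F, IsClosed (P F) := fun F =>
    (isClosed_cl S).inter (isClosed_eq (𝔰.r _).continuous continuous_const)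
  have hanti : ∀ {F F' : ι}, F.1 ⊆ F'.1 → P F' ⊆ P F := by
    intro F F' hFF' y hy
    refine ⟨hy.1, ?_⟩
    have h := hg hFF'
    change 𝔰.r (g F.1) y = 𝔰.r (g F.1) x
    rw [← (𝔰.comp_eq_of_le _ _ h y).1, hy.2, (𝔰.comp_eq_of_le _ _ h x).1]
  obtain ⟨y, hy⟩ := IsCompact.nonempty_iInter_of_directed_nonempty_isCompact_isClosed P
    (fun F F' => ⟨⟨F.1 ∪ F'.1, by rw [Finset.coe_union]; exact union_subset F.2 F'.2⟩,
      hanti Finset.subset_union_left, hanti Finset.subset_union_right⟩)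
    (fun F => ⟨𝔰.r (g F.1) x, mem_cl F.2 x, 𝔰.isRetraction _ x⟩)
    (fun F => (hPc F).isCompact) hPc
  rw [mem_iInter] at hy
  exact ⟨y, (hy (Classical.arbitrary _)).1, fun F hF => (hy ⟨F, hF⟩).2⟩

/-- For every set `S` of indices there is a continuous retraction onto `K_S` through which all
`r (g F)`, `F ⊆ S` finite, factor. Its graph is closed, which gives continuity. -/
theorem exists_retraction [CompactSpace K] [T2Space K] (hg : Monotone g)
    (hfull : 𝔰.inducedSet = univ) (S : Set 𝔰.Γ) :
    ∃ R : C(K, K), (∀ x, R x ∈ cl 𝔰 g S) ∧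
      ∀ x, ∀ F : Finset 𝔰.Γ, (F : Set 𝔰.Γ) ⊆ S → 𝔰.r (g F) (R x) = 𝔰.r (g F) x := by
  choose R hR1 hR2 using exists_limit (𝔰 := 𝔰) hg S
  refine ⟨⟨R, continuous_iff_isClosed.2 fun Z hZ => ?_⟩, hR1, hR2⟩
  let Gr : Set (K × K) := {p | p.2 ∈ Z ∩ cl 𝔰 g S} ∩
    ⋂ F : {F : Finset 𝔰.Γ // (F : Set 𝔰.Γ) ⊆ S}, {p | 𝔰.r (g F.1) p.2 = 𝔰.r (g F.1) p.1}
  have hGr : IsClosed Gr := by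
    refine ((hZ.inter (isClosed_cl S)).preimage continuous_snd).inter (isClosed_iInter fun F => ?_)
    exact isClosed_eq ((𝔰.r _).continuous.comp continuous_snd)
      ((𝔰.r _).continuous.comp continuous_fst)
  convert isClosedMap_fst_of_compactSpace _ hGr using 1
  ext x
  constructor
  · intro hx
    exact ⟨(x, R x), ⟨⟨hx, hR1 x⟩, mem_iInter.2 fun F => hR2 x F.1 F.2⟩, rfl⟩
  · rintro ⟨⟨x', y⟩, ⟨⟨hyZ, hyS⟩, hF⟩, rfl⟩
    have : R x' = y := cl_separated hg hfull (hR1 x') hyS fun F hFS =>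
      (hR2 x' F hFS).trans (mem_iInter.1 hF ⟨F, hFS⟩).symm
    change R x' ∈ Z
    rwa [this]

end Extended

/-! ### Point-countable families separating points -/

/-- `T` admits a family of real continuous functions on `K` that separates the points of `T` and of
which only countably many are nonzero at any given point of `K`. -/
def PointCountablySeparated (T : Set K) : Prop :=
  ∃ 𝓕 : Set C(K, ℝ), (∀ x, {f | f ∈ 𝓕 ∧ f x ≠ 0}.Countable) ∧
    ∀ x ∈ T, ∀ y ∈ T, (∀ f ∈ 𝓕, f x = f y) → x = y

theorem pointCountablySeparated_range [CompactSpace K] (𝔰 : RetractionalSkeleton K) (s : 𝔰.Γ) :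
    PointCountablySeparated (range (𝔰.r s)) := by
  have := 𝔰.metrizable s
  have : CompactSpace (range (𝔰.r s)) :=
    isCompact_iff_compactSpace.1 (isCompact_range (𝔰.r s).continuous)
  let := metrizableSpaceMetric (range (𝔰.r s))
  obtain ⟨D, hDc, hD⟩ := exists_countable_dense (range (𝔰.r s))
  let q : C(K, range (𝔰.r s)) := ⟨rangeFactorization (𝔰.r s), (𝔰.r s).continuous.subtype_mk _⟩
  have hq : ∀ x : range (𝔰.r s), q x = x := fun x => Subtype.ext ((mem_range_iff 𝔰).1 x.2)
  let φ : range (𝔰.r s) → C(K, ℝ) := fun d => ⟨fun x => dist (q x) d, by fun_prop⟩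
  refine ⟨φ '' D, fun x => (hDc.image φ).mono fun f hf => hf.1, fun x hx y hy h => ?_⟩
  have h1 : ∀ d ∈ D, dist (⟨x, hx⟩ : range (𝔰.r s)) d = dist (⟨y, hy⟩ : range (𝔰.r s)) d := by
    intro d hd
    have h2 : dist (q x) d = dist (q y) d := h _ (mem_image_of_mem φ hd)
    rwa [hq ⟨x, hx⟩, hq ⟨y, hy⟩] at h2
  have h3 : (fun d => dist (⟨x, hx⟩ : range (𝔰.r s)) d) =
      fun d => dist (⟨y, hy⟩ : range (𝔰.r s)) d :=
    Continuous.ext_on hD (by fun_prop) (by fun_prop) h1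
  have h4 := congrFun h3 ⟨x, hx⟩
  simp only [dist_self] at h4
  exact (congrArg Subtype.val (dist_eq_zero.1 h4.symm)).symm

theorem PointCountablySeparated.mono {T T' : Set K} (h : PointCountablySeparated T')
    (hT : T ⊆ T') : PointCountablySeparated T := by
  obtain ⟨𝓕, h1, h2⟩ := h
  exact ⟨𝓕, h1, fun x hx y hy => h2 x (hT hx) y (hT hy)⟩

theorem corson_of_pointCountablySeparated [CompactSpace K] (h : PointCountablySeparated (univ : Set K)) :
    IsCorsonCompact K := by
  obtain ⟨𝓕, hc, hsep⟩ := h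
  let φ : K → (𝓕 → ℝ) := fun x f => f.1 x
  have hφ : Continuous φ := continuous_pi fun f => f.1.continuous
  have hinj : Function.Injective φ := fun x y hxy =>
    hsep x (mem_univ _) y (mem_univ _) fun f hf => congrFun hxy ⟨f, hf⟩
  refine ⟨𝓕, range φ, isCompact_range hφ, ?_, ⟨(hφ.isClosedEmbedding hinj).toHomeomorph⟩⟩
  rintro _ ⟨x, rfl⟩
  refine ((hc x).preimage Subtype.val_injective).mono ?_
  exact fun f hf => ⟨f.2, hf⟩

section Induction

variable [CompactSpace K] [T2Space K] {𝔰 : RetractionalSkeleton K} {g : Finset 𝔰.Γ → 𝔰.Γ}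
  {R : Set 𝔰.Γ → C(K, K)}

theorem retraction_fixed (hg : Monotone g) (hfull : 𝔰.inducedSet = univ)
    (hR1 : ∀ S x, R S x ∈ cl 𝔰 g S)
    (hR2 : ∀ S x, ∀ F : Finset 𝔰.Γ, (F : Set 𝔰.Γ) ⊆ S → 𝔰.r (g F) (R S x) = 𝔰.r (g F) x)
    {S : Set 𝔰.Γ} {x : K} (hx : x ∈ cl 𝔰 g S) : R S x = x :=
  cl_separated hg hfull (hR1 S x) hx (hR2 S x)

theorem retraction_comp (hg : Monotone g) (hfull : 𝔰.inducedSet = univ)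
    (hR1 : ∀ S x, R S x ∈ cl 𝔰 g S)
    (hR2 : ∀ S x, ∀ F : Finset 𝔰.Γ, (F : Set 𝔰.Γ) ⊆ S → 𝔰.r (g F) (R S x) = 𝔰.r (g F) x)
    {S T : Set 𝔰.Γ} (h : S ⊆ T) (x : K) : R S (R T x) = R S x :=
  cl_separated hg hfull (hR1 S _) (hR1 S _) fun F hF => by
    rw [hR2 S _ F hF, hR2 S _ F hF, hR2 T _ F (hF.trans h)]

/-- Along a well-ordered increasing chain of index sets, the retractions move a given point only
countably often. The image of the point at stage `I` already lies in `K_C` for a countable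
`C ⊆ I`, so beyond `C` nothing changes before `I`. -/
theorem countable_jumps (hg : Monotone g) (hfull : 𝔰.inducedSet = univ)
    (hR1 : ∀ S x, R S x ∈ cl 𝔰 g S)
    (hR2 : ∀ S x, ∀ F : Finset 𝔰.Γ, (F : Set 𝔰.Γ) ⊆ S → 𝔰.r (g F) (R S x) = 𝔰.r (g F) x)
    {W : Type v} [LinearOrder W] [WellFoundedLT W] {i : W → 𝔰.Γ} (hi : Function.Injective i)
    (x : K) : {a : W | R (i '' Iic a) x ≠ R (i '' Iio a) x}.Countable := by
  set E := {a : W | R (i '' Iic a) x ≠ R (i '' Iio a) x} with hE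
  have step : ∀ I : Set W, IsLowerSet I → (∀ c ∈ I, (E ∩ Iic c).Countable) →
      (E ∩ I).Countable := by
    intro I hI hc
    obtain ⟨C, hCI, hCc, hyC⟩ := exists_countable_mem_cl hfull (hR1 (i '' I) x)
    obtain ⟨C', hC'I, rfl⟩ := subset_image_iff.1 hCI
    have hC'c : C'.Countable := countable_of_injective_of_countable_image hi.injOn hCc
    refine (hC'c.biUnion fun c hc' => hc c (hC'I hc')).mono ?_
    rintro b ⟨hbE, hbI⟩
    by_contra hb
    have hlt : ∀ c ∈ C', c < b := by
      intro c hc'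
      by_contra hcb
      exact hb (mem_biUnion hc' ⟨hbE, not_lt.1 hcb⟩)
    have key : ∀ J : Set W, J ⊆ I → C' ⊆ J → R (i '' J) x = R (i '' I) x := by
      intro J hJI hC'J
      rw [← retraction_comp hg hfull hR1 hR2 (image_mono hJI) x]
      exact retraction_fixed hg hfull hR1 hR2 (cl_mono (image_mono hC'J) hyC)
    apply hbE
    rw [key (Iic b) (fun c hcb => hI hcb hbI) fun c hc' => (hlt c hc').le,
      key (Iio b) (fun c hcb => hI (le_of_lt hcb) hbI) hlt]
  have hIic : ∀ a, (E ∩ Iic a).Countable := by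
    intro a
    induction a using WellFoundedLT.induction with
    | ind a ih =>
      have h1 := step (Iio a) (isLowerSet_Iio a) ih
      refine (h1.insert a).mono ?_
      rintro b ⟨hbE, hba⟩
      rcases eq_or_lt_of_le (show b ≤ a from hba) with rfl | hlt
      · exact mem_insert _ _
      · exact mem_insert_of_mem _ ⟨hbE, hlt⟩
  have := step univ isLowerSet_univ fun c _ => hIic c
  rwa [inter_univ] at this

/-- The inductive step: if all proper initial stages `i '' Iic a` of a well-ordered enumeration of
`range i` are settled, then so is `range i`. The family consists of the functions
`f ∘ R (i '' Iic a) - f ∘ R (i '' Iio a)`, with `f` in the family of stage `a`, and of the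
functions `f ∘ r (g ∅)` with `f` in a family separating the range of `r (g ∅)`. -/
theorem pointCountablySeparated_step (hg : Monotone g) (hfull : 𝔰.inducedSet = univ)
    (hR1 : ∀ S x, R S x ∈ cl 𝔰 g S)
    (hR2 : ∀ S x, ∀ F : Finset 𝔰.Γ, (F : Set 𝔰.Γ) ⊆ S → 𝔰.r (g F) (R S x) = 𝔰.r (g F) x)
    {W : Type v} [LinearOrder W] [WellFoundedLT W] {i : W → 𝔰.Γ} (hi : Function.Injective i)
    (ih : ∀ a, PointCountablySeparated (cl 𝔰 g (i '' Iic a))) :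
    PointCountablySeparated (cl 𝔰 g (range i)) := by
  classical
  choose 𝓕 h𝓕c h𝓕s using ih
  obtain ⟨𝓕₀, h₀c, h₀s⟩ := pointCountablySeparated_range 𝔰 (g ∅)
  let D : W → C(K, ℝ) → C(K, ℝ) := fun a f =>
    f.comp (R (i '' Iic a)) - f.comp (R (i '' Iio a))
  let 𝓕₀' : Set C(K, ℝ) := (fun f => f.comp (𝔰.r (g ∅))) '' 𝓕₀
  refine ⟨𝓕₀' ∪ ⋃ a, D a '' 𝓕 a, fun x => ?_, fun x hx y hy h => ?_⟩
  · have hJ := countable_jumps hg hfull hR1 hR2 hi x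
    refine (((h₀c (𝔰.r (g ∅) x)).image fun f => f.comp (𝔰.r (g ∅))).union
      (hJ.biUnion fun a _ => ((h𝓕c a (R (i '' Iic a) x)).union
        (h𝓕c a (R (i '' Iio a) x))).image (D a))).mono ?_
    rintro f ⟨hf | hf, hfx⟩
    · obtain ⟨f, hf, rfl⟩ := hf
      exact Or.inl ⟨f, ⟨hf, hfx⟩, rfl⟩
    · obtain ⟨a, f, hfa, rfl⟩ := mem_iUnion.1 hf
      have hfx' : f (R (i '' Iic a) x) - f (R (i '' Iio a) x) ≠ 0 := hfx
      refine Or.inr (mem_biUnion (x := a) ?_ ⟨f, ?_, rfl⟩)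
      · intro heq
        exact hfx' (by rw [heq, sub_self])
      · by_cases h0 : f (R (i '' Iic a) x) = 0
        · refine Or.inr ⟨hfa, fun h1 => hfx' (by rw [h0, h1, sub_self])⟩
        · exact Or.inl ⟨hfa, h0⟩
  · have hempty : 𝔰.r (g ∅) x = 𝔰.r (g ∅) y :=
      h₀s _ (mem_range_self x) _ (mem_range_self y) fun f hf =>
        h _ (Or.inl (mem_image_of_mem _ hf))
    -- For finite `F ⊆ i '' I`, `r (g F)` factors through the stage of the largest element of `F`.
    have hfin : ∀ I : Set W, (∀ b ∈ I, R (i '' Iic b) x = R (i '' Iic b) y) →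
        ∀ F : Finset 𝔰.Γ, (F : Set 𝔰.Γ) ⊆ i '' I → 𝔰.r (g F) x = 𝔰.r (g F) y := by
      intro I hI F hF
      obtain ⟨F', hF'I, rfl⟩ := Finset.subset_set_image_iff.1 hF
      rcases F'.eq_empty_or_nonempty with rfl | hne
      · simpa using hempty
      · have hsub : ((F'.image i : Finset 𝔰.Γ) : Set 𝔰.Γ) ⊆ i '' Iic (F'.max' hne) := by
          rw [Finset.coe_image]
          exact image_mono fun b hb => F'.le_max' b hb
        rw [← hR2 _ x _ hsub, ← hR2 _ y _ hsub, hI _ (hF'I (F'.max'_mem hne))]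
    have hstage : ∀ a, R (i '' Iic a) x = R (i '' Iic a) y := by
      intro a
      induction a using WellFoundedLT.induction with
      | ind a iha =>
        have hlt : R (i '' Iio a) x = R (i '' Iio a) y :=
          cl_separated hg hfull (hR1 _ x) (hR1 _ y) fun F hF => by
            rw [hR2 _ x F hF, hR2 _ y F hF]
            exact hfin (Iio a) iha F hF
        refine h𝓕s a _ (hR1 _ x) _ (hR1 _ y) fun f hf => ?_
        have h1 : f (R (i '' Iic a) x) - f (R (i '' Iio a) x) =
            f (R (i '' Iic a) y) - f (R (i '' Iio a) y) :=
          h (D a f) (Or.inr (mem_iUnion.2 ⟨a, mem_image_of_mem _ hf⟩))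
        rw [hlt] at h1
        exact sub_left_injective h1
    exact cl_separated hg hfull hx hy fun F hF =>
      hfin univ (fun b _ => hstage b) F (by rwa [image_univ])

theorem pointCountablySeparated_cl (hg : Monotone g) (hfull : 𝔰.inducedSet = univ) (S : Set 𝔰.Γ) :
    PointCountablySeparated (cl 𝔰 g S) := by
  choose R hR1 hR2 using exists_retraction (𝔰 := 𝔰) hg hfull
  induction h : Cardinal.mk S using WellFoundedLT.induction generalizing S with
  | ind κ ih =>
    rcases S.finite_or_infinite with hS | hS
    · exact (pointCountablySeparated_range 𝔰 (g hS.toFinset)).mono (cl_subset_range fun F hF =>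
        hg fun s hs => hS.mem_toFinset.2 (hF hs))
    · let W := (Cardinal.mk S).ord.ToType
      obtain ⟨e⟩ : Nonempty (W ≃ S) := Cardinal.eq.1 (Cardinal.mk_ord_toType _)
      let i : W → 𝔰.Γ := fun w => e w
      have hi : Function.Injective i := Subtype.val_injective.comp e.injective
      have hrange : range i = S := by
        rw [show i = Subtype.val ∘ e from rfl, range_comp, e.range_eq_univ, image_univ,
          Subtype.range_coe]
      have hinf : Cardinal.aleph0 ≤ Cardinal.mk S := by
        have := hS.to_subtype
        exact Cardinal.aleph0_le_mk _
      rw [← hrange]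
      refine pointCountablySeparated_step hg hfull hR1 hR2 hi fun a => ih _ ?_ _ rfl
      calc Cardinal.mk (i '' Iic a) ≤ Cardinal.mk (Iic a) := Cardinal.mk_image_le
        _ = Cardinal.mk (insert a (Iio a) : Set W) := by rw [Iio_insert]
        _ ≤ Cardinal.mk (Iio a) + 1 := Cardinal.mk_insert_le
        _ < Cardinal.mk S := Cardinal.add_lt_of_lt hinf
            ((Cardinal.mk_Iio_lt a (by simp [W])).trans_eq (Cardinal.mk_ord_toType _))
            (Cardinal.one_lt_aleph0.trans_le hinf)
        _ = κ := h

end Induction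

theorem corson_of_full [CompactSpace K] [T2Space K] (𝔰 : RetractionalSkeleton K)
    (hfull : 𝔰.inducedSet = univ) : IsCorsonCompact K := by
  obtain ⟨g, hg, hg1⟩ := exists_monotone_bound 𝔰.Γ
  exact corson_of_pointCountablySeparated (cl_univ hg1 hfull ▸ pointCountablySeparated_cl hg hfull univ)

end CorsonSkeleton

/-- A compact Hausdorff space `K` is Corson compact if and only if `K` itself is induced by
an r-skeleton in `K`; moreover if `K` is Corson compact then every set induced by an
r-skeleton in `K` equals `K`. -/
theorem corson_iff_univ_inducedByRSkeleton (K : Type u) [TopologicalSpace K] [CompactSpace K]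
    [T2Space K] :
    (IsCorsonCompact K ↔ IsInducedByRSkeleton (Set.univ : Set K)) ∧
      (IsCorsonCompact K → ∀ D : Set K, IsInducedByRSkeleton D → D = Set.univ) := by
  have huniv : IsCorsonCompact K → ∀ D : Set K, IsInducedByRSkeleton D → D = Set.univ := by
    rintro hK _ ⟨𝔰, rfl⟩
    obtain ⟨𝔱, h𝔱⟩ := CorsonSkeleton.exists_full_of_corson hK
    exact CorsonSkeleton.inducedSet_eq_univ 𝔰 (CorsonSkeleton.tight 𝔱 h𝔱)
  exact ⟨⟨CorsonSkeleton.exists_full_of_corson,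
    fun ⟨𝔰, h𝔰⟩ => CorsonSkeleton.corson_of_full 𝔰 h𝔰⟩, huniv⟩
end

section
/- Let X be a Banach space and D ⊂ X* a set induced by a 1-projectional skeleton in X. Then there exists a convex, symmetric (i.e., R = −R) set R which is induced by an r-skeleton in the compact space (B_{X*}, w*); namely, if {P_s}_{s∈Γ} is a 1-projectional skeleton with D = ⋃_{s∈Γ} P_s*[X*], then {P_s*↾_{B_{X*}}}_{s∈Γ} is a retractional skeleton in (B_{X*}, w*) and R = ⋃_{s∈Γ} P_s*[B_{X*}] = D ∩ B_{X*} is convex and symmetric. -/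
/-!
The adjoints `P s*` of norm-one projections map the dual ball to itself, are weak* continuous and
inherit idempotence and compatibility from the `P s`. The remaining skeleton axioms reduce to
pointwise statements in `X`:

* the net `P s* φ` converges to `φ` because every `x` is fixed by `P s` for all large `s`;
* for an increasing sequence with supremum `t`, one has `P (f n) x → P t x` in norm
  (`ProjectionalSkeleton.tendsto_sup`), by density of `⋃ n, P (f n) [X]` in `P t [X]` and the
  uniform bound on the norms;
* the range of `P s*` on the ball is weak* compact and its elements are determined by their values
  on a countable set whose closure contains `P s [X]`, so it embeds in a countable power of `ℝ`.

An element of `P s* [X*]` is fixed by `P w*` for every `w ≥ s`. By directedness two elements of `D`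
are therefore fixed by a common `P w*`, which gives convexity.
-/

open Filter Topology TopologicalSpace Set

universe u v

/-- A projectional skeleton in a normed space `X`: a family of bounded linear projections
indexed by an up-directed (nonempty) partially ordered set `Γ` such that
(i) `X = ⋃ s, P s [X]` and each `P s [X]` is separable;
(ii) `s ≤ t` implies `P s ∘ P t = P t ∘ P s = P s`;
(iii) each strictly increasing sequence has a supremum `t` with
`P t [X] = closure (⋃ n, P (f n) [X])`. -/
structure ProjectionalSkeleton (X : Type u) [NormedAddCommGroup X] [NormedSpace ℝ X] :
    Type (u + 1) where
  Γ : Type u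
  [po : PartialOrder Γ]
  [ne : Nonempty Γ]
  directed : ∀ s t : Γ, ∃ w, s ≤ w ∧ t ≤ w
  P : Γ → X →L[ℝ] X
  idem : ∀ s, ∀ x : X, P s (P s x) = P s x
  separable : ∀ s, IsSeparable (Set.range (P s))
  covers : ∀ x : X, ∃ s, x ∈ Set.range (P s)
  comp_eq_of_le : ∀ s t : Γ, s ≤ t → ∀ x : X, P s (P t x) = P s x ∧ P t (P s x) = P s x
  sup_seq : ∀ f : ℕ → Γ, StrictMono f → ∃ t : Γ, IsLUB (Set.range f) t ∧
    (Set.range (P t) : Set X) = closure (⋃ n, Set.range (P (f n)))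

/-- `X` has a 1-projectional skeleton: a projectional skeleton with `‖P s‖ ≤ 1` for all `s`. -/
def Has1ProjectionalSkeleton (X : Type u) [NormedAddCommGroup X] [NormedSpace ℝ X] : Prop :=
  ∃ 𝔰 : ProjectionalSkeleton X, ∀ s, ‖𝔰.P s‖ ≤ 1

/-- The closed unit ball of the dual of `X`, as a subset of the weak* dual `(X*, w*)`. -/
def dualBall (X : Type u) [NormedAddCommGroup X] [NormedSpace ℝ X] : Set (WeakDual ℝ X) :=
  {φ | ∀ x : X, |φ x| ≤ ‖x‖}

/-- The adjoint `P* : X* → X*`, `φ ↦ φ ∘ P`, acting on the weak* dual. -/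
noncomputable def dualAdjoint {X : Type u} [NormedAddCommGroup X] [NormedSpace ℝ X]
    (P : X →L[ℝ] X) (φ : WeakDual ℝ X) : WeakDual ℝ X :=
  show X →L[ℝ] ℝ from (show X →L[ℝ] ℝ from φ).comp P

@[simp]
lemma dualAdjoint_apply {X : Type u} [NormedAddCommGroup X] [NormedSpace ℝ X]
    (P : X →L[ℝ] X) (φ : WeakDual ℝ X) (x : X) : dualAdjoint P φ x = φ (P x) := rfl

lemma continuous_dualAdjoint {X : Type u} [NormedAddCommGroup X] [NormedSpace ℝ X]
    (P : X →L[ℝ] X) : Continuous (dualAdjoint P) :=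
  WeakDual.continuous_of_continuous_eval fun x => WeakDual.eval_continuous (P x)

lemma dualAdjoint_mem_dualBall {X : Type u} [NormedAddCommGroup X] [NormedSpace ℝ X]
    {P : X →L[ℝ] X} (hP : ‖P‖ ≤ 1) {φ : WeakDual ℝ X} (hφ : φ ∈ dualBall X) :
    dualAdjoint P φ ∈ dualBall X := fun x =>
  (hφ (P x)).trans ((P.le_of_opNorm_le hP x).trans_eq (one_mul _))

/-- The Banach–Alaoglu theorem for `dualBall X`. -/
lemma isCompact_dualBall (X : Type u) [NormedAddCommGroup X] [NormedSpace ℝ X] :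
    IsCompact (dualBall X) := by
  convert WeakDual.isCompact_closedBall (𝕜 := ℝ) (E := X) 0 1 using 1
  ext φ
  simp only [dualBall, Set.mem_ofPred_eq, Set.mem_preimage, mem_closedBall_zero_iff]
  rw [ContinuousLinearMap.opNorm_le_iff zero_le_one]
  simp only [one_mul, Real.norm_eq_abs]
  rfl

lemma convex_dualBall (X : Type u) [NormedAddCommGroup X] [NormedSpace ℝ X] :
    Convex ℝ (dualBall X) := by
  intro φ hφ ψ hψ a b ha hb hab x
  change |a * φ x + b * ψ x| ≤ ‖x‖
  calc |a * φ x + b * ψ x| ≤ |a * φ x| + |b * ψ x| := abs_add_le _ _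
    _ = a * |φ x| + b * |ψ x| := by rw [abs_mul, abs_mul, abs_of_nonneg ha, abs_of_nonneg hb]
    _ ≤ a * ‖x‖ + b * ‖x‖ := by gcongr; exacts [hφ x, hψ x]
    _ = ‖x‖ := by rw [← add_mul, hab, one_mul]

namespace ProjectionalSkeleton

attribute [local instance] ProjectionalSkeleton.po ProjectionalSkeleton.ne

variable {X : Type u} [NormedAddCommGroup X] [NormedSpace ℝ X] (𝔰 : ProjectionalSkeleton X)

lemma apply_eq_of_mem_range {s t : 𝔰.Γ} (hst : s ≤ t) {x : X} (hx : x ∈ Set.range (𝔰.P s)) :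
    𝔰.P t x = x := by
  obtain ⟨y, rfl⟩ := hx
  exact (𝔰.comp_eq_of_le s t hst y).2

lemma dualAdjoint_eq_of_mem_range {s t : 𝔰.Γ} (hst : s ≤ t) {φ : WeakDual ℝ X}
    (hφ : φ ∈ Set.range (dualAdjoint (𝔰.P s))) : dualAdjoint (𝔰.P t) φ = φ := by
  obtain ⟨ψ, rfl⟩ := hφ
  exact DFunLike.ext _ _ fun x => congrArg ψ (𝔰.comp_eq_of_le s t hst x).1

/-- In a 1-projectional skeleton, projections along a strictly increasing sequence converge
pointwise in norm to the projection at the supremum. -/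
lemma tendsto_sup (h1 : ∀ s, ‖𝔰.P s‖ ≤ 1) {f : ℕ → 𝔰.Γ} (hf : StrictMono f) {t : 𝔰.Γ}
    (ht : IsLUB (Set.range f) t)
    (hr : (Set.range (𝔰.P t) : Set X) = closure (⋃ n, Set.range (𝔰.P (f n)))) (x : X) :
    Tendsto (fun n => 𝔰.P (f n) x) atTop (𝓝 (𝔰.P t x)) := by
  rw [Metric.tendsto_atTop]
  intro ε hε
  have hy : 𝔰.P t x ∈ closure (⋃ n, Set.range (𝔰.P (f n))) := hr ▸ Set.mem_range_self x
  obtain ⟨z, hz, hyz⟩ := Metric.mem_closure_iff.1 hy (ε / 2) (half_pos hε)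
  obtain ⟨m, hm⟩ := Set.mem_iUnion.1 hz
  refine ⟨m, fun n hn => ?_⟩
  have hfix : 𝔰.P (f n) z = z := 𝔰.apply_eq_of_mem_range (hf.monotone hn) hm
  have hcomp : 𝔰.P (f n) (𝔰.P t x) = 𝔰.P (f n) x :=
    (𝔰.comp_eq_of_le _ _ (ht.1 ⟨n, rfl⟩) x).1
  have hle : ‖𝔰.P (f n) (𝔰.P t x - z)‖ ≤ ‖𝔰.P t x - z‖ :=
    ((𝔰.P (f n)).le_of_opNorm_le (h1 _) _).trans_eq (one_mul _)
  rw [map_sub, hcomp, hfix] at hle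
  calc dist (𝔰.P (f n) x) (𝔰.P t x) ≤ dist (𝔰.P (f n) x) z + dist (𝔰.P t x) z :=
        dist_triangle_right _ _ _
    _ < ε := by rw [dist_eq_norm (𝔰.P (f n) x)]; rw [dist_eq_norm] at hyz ⊢; linarith

/-- The restriction of `P s*` to the dual ball. -/
noncomputable def ballRetraction (h1 : ∀ s, ‖𝔰.P s‖ ≤ 1) (s : 𝔰.Γ) :
    C(↥(dualBall X), ↥(dualBall X)) where
  toFun φ := ⟨dualAdjoint (𝔰.P s) φ, dualAdjoint_mem_dualBall (h1 s) φ.2⟩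
  continuous_toFun := ((continuous_dualAdjoint _).comp continuous_subtype_val).subtype_mk _

lemma ballRetraction_apply (h1 : ∀ s, ‖𝔰.P s‖ ≤ 1) (s : 𝔰.Γ) (φ : ↥(dualBall X)) (x : X) :
    (𝔰.ballRetraction h1 s φ).1 x = φ.1 (𝔰.P s x) := rfl

/-- Convergence in `(B_{X*}, w*)` is pointwise convergence. -/
lemma tendsto_dualBall {ι : Type*} {l : Filter ι} {g : ι → ↥(dualBall X)} {φ : ↥(dualBall X)}
    (h : ∀ x : X, Tendsto (fun i => (g i).1 x) l (𝓝 (φ.1 x))) : Tendsto g l (𝓝 φ) := by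
  rw [tendsto_subtype_rng]
  exact (WeakBilin.tendsto_iff_forall_eval_tendsto _ ContinuousLinearMap.coe_injective).2 h

/-- The range of the restricted adjoint is compact, and evaluation at a countable set whose closure
contains `P s [X]` is injective on it, hence a closed embedding into a countable power of `ℝ`. -/
lemma metrizable_range_ballRetraction (h1 : ∀ s, ‖𝔰.P s‖ ≤ 1) (s : 𝔰.Γ) :
    MetrizableSpace ↥(Set.range (𝔰.ballRetraction h1 s)) := by
  have : CompactSpace ↥(dualBall X) := isCompact_iff_compactSpace.1 (isCompact_dualBall X)
  have : CompactSpace ↥(Set.range (𝔰.ballRetraction h1 s)) :=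
    isCompact_iff_compactSpace.1 (isCompact_range (𝔰.ballRetraction h1 s).continuous)
  obtain ⟨c, hc, hdense⟩ := 𝔰.separable s
  have : Countable c := hc.to_subtype
  let e : ↥(Set.range (𝔰.ballRetraction h1 s)) → c → ℝ := fun φ y => φ.1.1 y
  have he : Continuous e := continuous_pi fun y =>
    (WeakDual.eval_continuous (y : X)).comp (continuous_subtype_val.comp continuous_subtype_val)
  have hinj : Function.Injective e := by
    rintro ⟨_, φ, rfl⟩ ⟨_, ψ, rfl⟩ heq
    have hEq : Set.EqOn (𝔰.ballRetraction h1 s φ).1 (𝔰.ballRetraction h1 s ψ).1 (closure c) :=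
      Set.EqOn.closure (fun y hy => congrFun heq ⟨y, hy⟩)
        (ContinuousLinearMap.continuous _) (ContinuousLinearMap.continuous _)
    refine Subtype.ext (Subtype.ext (DFunLike.ext _ _ fun x => ?_))
    have hx := hEq (hdense ⟨x, rfl⟩)
    rwa [ballRetraction_apply, ballRetraction_apply, 𝔰.idem] at hx
  exact (he.isClosedEmbedding hinj).isEmbedding.metrizableSpace

/-- The retractional skeleton of the dual ball formed by the restricted adjoints. -/
noncomputable def ballSkeleton (h1 : ∀ s, ‖𝔰.P s‖ ≤ 1) : RetractionalSkeleton ↥(dualBall X) where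
  Γ := 𝔰.Γ
  directed := 𝔰.directed
  r := 𝔰.ballRetraction h1
  isRetraction s φ := Subtype.ext (𝔰.dualAdjoint_eq_of_mem_range le_rfl ⟨_, rfl⟩)
  metrizable := 𝔰.metrizable_range_ballRetraction h1
  tendsto_id φ := by
    refine tendsto_dualBall fun x => tendsto_const_nhds.congr' ?_
    obtain ⟨s, hs⟩ := 𝔰.covers x
    filter_upwards [eventually_ge_atTop s] with t ht
    rw [ballRetraction_apply, 𝔰.apply_eq_of_mem_range ht hs]
  comp_eq_of_le s t hst φ :=
    ⟨Subtype.ext (DFunLike.ext _ _ fun x => congrArg φ.1 (𝔰.comp_eq_of_le s t hst x).2),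
      Subtype.ext (𝔰.dualAdjoint_eq_of_mem_range hst ⟨_, rfl⟩)⟩
  sup_seq f hf := by
    obtain ⟨t, ht, hr⟩ := 𝔰.sup_seq f hf
    exact ⟨t, ht, fun φ => tendsto_dualBall fun x =>
      ((ContinuousLinearMap.continuous φ.1).tendsto _).comp (𝔰.tendsto_sup h1 hf ht hr x)⟩

lemma inducedSet_ballSkeleton (h1 : ∀ s, ‖𝔰.P s‖ ≤ 1) :
    (𝔰.ballSkeleton h1).inducedSet =
      Subtype.val ⁻¹' ((⋃ s, Set.range (dualAdjoint (𝔰.P s))) ∩ dualBall X) := by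
  ext φ
  constructor
  · intro hφ
    obtain ⟨s, ψ, rfl⟩ := Set.mem_iUnion.1 hφ
    exact ⟨Set.mem_iUnion.2 ⟨s, ψ.1, rfl⟩, Subtype.prop _⟩
  · rintro ⟨hφ, -⟩
    obtain ⟨s, hs⟩ := Set.mem_iUnion.1 hφ
    exact Set.mem_iUnion.2 ⟨s, φ, Subtype.ext (𝔰.dualAdjoint_eq_of_mem_range le_rfl hs)⟩

/-- Directedness puts any two elements of the induced set into the range of a common adjoint. -/
lemma convex_inducedSet : Convex ℝ (⋃ s, Set.range (dualAdjoint (𝔰.P s))) := by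
  intro φ hφ ψ hψ a b _ _ _
  obtain ⟨s, hs⟩ := Set.mem_iUnion.1 hφ
  obtain ⟨t, ht⟩ := Set.mem_iUnion.1 hψ
  obtain ⟨w, hsw, htw⟩ := 𝔰.directed s t
  refine Set.mem_iUnion.2 ⟨w, a • φ + b • ψ, ?_⟩
  conv_rhs => rw [← 𝔰.dualAdjoint_eq_of_mem_range hsw hs, ← 𝔰.dualAdjoint_eq_of_mem_range htw ht]
  rfl

end ProjectionalSkeleton

/-- If `D ⊆ X*` is induced by a 1-projectional skeleton `{P s}` (i.e. `D = ⋃ s, P s* [X*]`),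
then there is a convex symmetric set `R` induced by an r-skeleton in `(B_{X*}, w*)`;
namely `R = D ∩ B_{X*}` works. -/
theorem convex_symmetric_induced_of_one_projectional_skeleton (X : Type u)
    [NormedAddCommGroup X] [NormedSpace ℝ X] [CompleteSpace X]
    (D : Set (WeakDual ℝ X))
    (h : ∃ 𝔰 : ProjectionalSkeleton X, (∀ s, ‖𝔰.P s‖ ≤ 1) ∧
      D = ⋃ s, Set.range (dualAdjoint (𝔰.P s))) :
    ∃ R : Set (WeakDual ℝ X), R ⊆ dualBall X ∧ Convex ℝ R ∧ (∀ φ ∈ R, -φ ∈ R) ∧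
      IsInducedByRSkeleton (Subtype.val ⁻¹' R : Set ↥(dualBall X)) ∧
      R = D ∩ dualBall X := by
  obtain ⟨𝔰, h1, rfl⟩ := h
  refine ⟨_, Set.inter_subset_right, 𝔰.convex_inducedSet.inter (convex_dualBall X), ?_,
    ⟨𝔰.ballSkeleton h1, 𝔰.inducedSet_ballSkeleton h1⟩, rfl⟩
  rintro φ ⟨hφ, hb⟩
  obtain ⟨s, ψ, rfl⟩ := Set.mem_iUnion.1 hφ
  exact ⟨Set.mem_iUnion.2 ⟨s, -ψ, rfl⟩, fun x => (abs_neg _).trans_le (hb x)⟩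
end
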